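/- arXiv:2005.02448 — 4 statements merged into one kernel-verified Lean document; each statement's English description precedes it below -/
import Mathlib

section
/- Let σ = [[a,b],[c,d]] ∈ GL_2(F_q) with ac ≠ 0, and let f(x) = x^n - A be irreducible over F_q with A ≠ (a/c)^n·(c^n A ≠ a^n, i.e., f(a/c) ≠ 0). Let g = P_σ(f) and α a root of g. Then α is normal over F_q if and only if c^{n-1} d A - b a^{n-1} ≠ 0. -/
open Polynomial Module

/-- `P_σ(f)(x) = (cx+d)^n f((ax+b)/(cx+d))` as a polynomial, for `n = deg f`. -/
noncomputable def Pmat {K : Type} [Field K] (a b c d : K) (f : Polynomial K) : Polynomial K :=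
  ∑ i ∈ Finset.range (f.natDegree + 1),
    C (f.coeff i) * (C a * X + C b) ^ i * (C c * X + C d) ^ (f.natDegree - i)

section CyclicEndomorphism

variable {K V : Type*} [Field K] [AddCommGroup V] [Module K V] {n : ℕ}

lemma pow_val_natCast {M : Type*} [Monoid M] {x : M} (hx : x ^ n = 1) (k : ℕ) :
    x ^ (k : ZMod n).val = x ^ k := by
  rw [ZMod.val_natCast]
  exact (pow_eq_pow_mod k hx).symm

variable [NeZero n]

/-- The element `∑ i, l i • φ ^ i` of the algebra generated by `φ`, where the exponent `i` runs
over the representatives `0, …, n - 1` of `ZMod n`. -/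
def cyclicPoly (φ : End K V) (l : ZMod n → K) : End K V := ∑ i, l i • φ ^ i.val

lemma cyclicPoly_apply (φ : End K V) (l : ZMod n → K) (v : V) :
    cyclicPoly φ l v = ∑ i, l i • (φ ^ i.val) v := by
  simp [cyclicPoly]

lemma commute_cyclicPoly (φ : End K V) (l : ZMod n → K) : Commute φ (cyclicPoly φ l) :=
  Commute.sum_right _ _ _ fun _ _ ↦ ((Commute.refl φ).pow_right _).smul_right _

lemma cyclicPoly_injective {φ : End K V} {w : V}
    (hw : LinearIndependent K fun i : ZMod n ↦ (φ ^ i.val) w) :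
    Function.Injective (cyclicPoly (n := n) φ) := by
  intro l m h
  have h' := congrArg (fun T : End K V ↦ T w) h
  simp only [cyclicPoly_apply] at h'
  exact funext (Fintype.linearIndependent_iffₛ.mp hw l m h')

lemma exists_cyclicPoly_eq_of_commute (hrank : finrank K V = n) {φ : End K V} {w : V}
    (hw : LinearIndependent K fun i : ZMod n ↦ (φ ^ i.val) w) {T : End K V} (hT : Commute φ T) :
    ∃ l : ZMod n → K, T = cyclicPoly φ l := by
  let B := basisOfLinearIndependentOfCardEqFinrank hw (by rw [ZMod.card, hrank])
  have hB (i) : B i = (φ ^ i.val) w := by simp [B]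
  have hTw : T w = cyclicPoly φ (B.repr (T w)) w := by
    simp only [cyclicPoly_apply, ← hB, B.sum_repr]
  refine ⟨B.repr (T w), B.ext fun i ↦ ?_⟩
  have h₁ := LinearMap.congr_fun (hT.pow_left i.val).eq w
  have h₂ := LinearMap.congr_fun ((commute_cyclicPoly φ (B.repr (T w))).pow_left i.val).eq w
  simp only [Module.End.mul_apply] at h₁ h₂
  rw [hB, ← h₁, ← h₂, ← hTw]

lemma cyclicPoly_pow_card_pow [Fintype K] (φ : End K V) (l : ZMod n → K) (N : ℕ) :
    cyclicPoly φ l ^ Fintype.card K ^ N = ∑ i, l i • φ ^ (Fintype.card K ^ N * i.val) := by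
  have h (P : K[X]) : P ^ Fintype.card K ^ N = expand K (Fintype.card K ^ N) P := by
    induction N with
    | zero => simp
    | succ N ih => rw [pow_succ, pow_mul, ih, ← FiniteField.expand_card, expand_expand, mul_comm]
  have hl : cyclicPoly φ l = aeval φ (∑ i, C (l i) * X ^ i.val) := by
    simp [cyclicPoly, Algebra.smul_def]
  rw [hl, ← map_pow, h]
  simp [Algebra.smul_def, pow_mul]

lemma cyclicPoly_comp_mul_pow_card [Fintype K] {φ : End K V} (hφ : φ ^ n = 1)
    (hq : (Fintype.card K).Coprime n) (l : ZMod n → K) :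
    cyclicPoly φ (fun i ↦ l ((Fintype.card K : ZMod n) * i)) ^ Fintype.card K =
      cyclicPoly φ l := by
  have h := cyclicPoly_pow_card_pow φ (fun i ↦ l ((Fintype.card K : ZMod n) * i)) 1
  rw [pow_one] at h
  rw [h]
  refine Eq.trans ?_ (Equiv.sum_comp (ZMod.unitOfCoprime _ hq).mulLeft fun i ↦ l i • φ ^ i.val)
  refine Finset.sum_congr rfl fun i _ ↦ ?_
  have := pow_val_natCast hφ (Fintype.card K * i.val)
  simp only [Nat.cast_mul, ZMod.natCast_val, ZMod.cast_id', id_eq] at this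
  simp [this]

lemma invariant_of_cyclicPoly_pow_card [Fintype K] {φ : End K V} (hφ : φ ^ n = 1)
    (hq : (Fintype.card K).Coprime n) {w : V}
    (hw : LinearIndependent K fun i : ZMod n ↦ (φ ^ i.val) w) {l : ZMod n → K}
    (hl : cyclicPoly φ l ^ Fintype.card K = cyclicPoly φ l) (i : ZMod n) :
    l ((Fintype.card K : ZMod n) * i) = l i := by
  let u := ZMod.unitOfCoprime _ hq
  have hu (i : ZMod n) : (↑u⁻¹ : ZMod n) * ((Fintype.card K : ZMod n) * i) = i :=
    u.inv_mul_cancel_left i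
  have h := cyclicPoly_comp_mul_pow_card hφ hq fun i ↦ l (↑u⁻¹ * i)
  simp only [hu] at h
  rw [hl] at h
  rw [congrFun (cyclicPoly_injective hw h) (Fintype.card K * i), hu]

lemma cyclicPoly_pow_card_pow_totient [Fintype K] {φ : End K V} (hφ : φ ^ n = 1)
    (hq : (Fintype.card K).Coprime n) (l : ZMod n → K) :
    cyclicPoly φ l ^ Fintype.card K ^ n.totient = cyclicPoly φ l := by
  rw [cyclicPoly_pow_card_pow]
  refine Finset.sum_congr rfl fun i _ ↦ ?_
  rw [← pow_val_natCast hφ]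
  have h := congrArg Units.val (ZMod.pow_totient (ZMod.unitOfCoprime _ hq))
  simp only [Units.val_pow_eq_pow_val, ZMod.coe_unitOfCoprime, Units.val_one] at h
  simp [h]

variable {φ : End K V} {b : Basis (ZMod n) K V} {s : ZMod n → K}

lemma commute_constr_of_invariant {q : ZMod n} (hb : ∀ j, φ (b j) = s j • b (q * j))
    {k : ZMod n → K} (hk : ∀ j, k (q * j) = k j) :
    Commute φ (b.constr K fun j ↦ k j • b j) := by
  refine b.ext fun j ↦ ?_
  simp [hb, hk, smul_comm (s j)]

/-- If `φ` acts on a basis as a monomial transformation along multiplication by `#K`, then every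
element of the algebra of `φ` fixed by Frobenius is diagonal in that basis. -/
lemma exists_diagonal_of_invariant [Fintype K] (hφ : φ ^ n = 1) (hq : (Fintype.card K).Coprime n)
    (hb : ∀ j, φ (b j) = s j • b ((Fintype.card K : ZMod n) * j)) {w : V}
    (hw : LinearIndependent K fun i : ZMod n ↦ (φ ^ i.val) w)
    {l : ZMod n → K} (hl : ∀ i, l ((Fintype.card K : ZMod n) * i) = l i) :
    ∃ k : ZMod n → K, ∀ j, cyclicPoly φ l (b j) = k j • b j := by
  let E := {l : ZMod n → K // ∀ i, l ((Fintype.card K : ZMod n) * i) = l i}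
  have hrank : finrank K V = n := by rw [finrank_eq_card_basis b, ZMod.card]
  choose F hF using fun k : E ↦
    exists_cyclicPoly_eq_of_commute hrank hw (commute_constr_of_invariant hb k.2)
  have hFE (k : E) : ∀ i, F k ((Fintype.card K : ZMod n) * i) = F k i := by
    refine invariant_of_cyclicPoly_pow_card hφ hq hw ?_
    rw [← hF k]
    have (m : ℕ) (j) : ((b.constr K fun j ↦ k.1 j • b j) ^ m) (b j) = k.1 j ^ m • b j := by
      induction m with
      | zero => simp
      | succ m ih => simp [pow_succ, ih, smul_smul, mul_comm]
    refine b.ext fun j ↦ ?_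
    rw [this, FiniteField.pow_card, b.constr_basis]
  have hinj : Function.Injective fun k : E ↦ (⟨F k, hFE k⟩ : E) := by
    intro k k' h
    have h' : F k = F k' := congrArg Subtype.val h
    have hc := (hF k).trans ((congrArg _ h').trans (hF k').symm)
    refine Subtype.ext (funext fun j ↦ smul_left_injective K (b.ne_zero j) ?_)
    simpa using LinearMap.congr_fun hc (b j)
  obtain ⟨k, hk⟩ := (Finite.injective_iff_surjective.mp hinj) ⟨l, hl⟩
  have hk' : F k = l := congrArg Subtype.val hk
  exact ⟨k.1, fun j ↦ by rw [← hk', ← hF k, b.constr_basis]⟩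

theorem linearIndependent_pow_apply_of_forall_repr_ne_zero [Fintype K] (hφ : φ ^ n = 1)
    (hq : (Fintype.card K).Coprime n)
    (hb : ∀ j, φ (b j) = s j • b ((Fintype.card K : ZMod n) * j)) {w : V}
    (hw : LinearIndependent K fun i : ZMod n ↦ (φ ^ i.val) w)
    {v : V} (hv : ∀ j, b.repr v j ≠ 0) :
    LinearIndependent K fun i : ZMod n ↦ (φ ^ i.val) v := by
  rw [Fintype.linearIndependent_iff]
  intro l hl
  rw [← cyclicPoly_apply] at hl
  have hrank : finrank K V = n := by rw [finrank_eq_card_basis b, ZMod.card]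
  set P := cyclicPoly φ l with hP
  have hPpow : P ^ Fintype.card K ^ n.totient = P := cyclicPoly_pow_card_pow_totient hφ hq l
  obtain ⟨m, hm⟩ : ∃ m, Fintype.card K ^ n.totient = m + 2 :=
    Nat.exists_eq_add_of_le' (Nat.one_lt_pow (Nat.totient_pos.mpr (NeZero.pos n)).ne'
      Fintype.one_lt_card)
  rw [hm] at hPpow
  have hidem : IsIdempotentElem (P ^ (m + 1)) := by
    rw [IsIdempotentElem, ← pow_add, show m + 1 + (m + 1) = m + 2 + m by ring, pow_add, hPpow,
      ← pow_succ']
  obtain ⟨μ, hμ⟩ := exists_cyclicPoly_eq_of_commute hrank hw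
    ((commute_cyclicPoly φ l).pow_right (m + 1))
  rw [← hP] at hμ
  have hμinv : ∀ i, μ ((Fintype.card K : ZMod n) * i) = μ i := by
    refine invariant_of_cyclicPoly_pow_card hφ hq hw ?_
    rw [← hμ, hidem.pow_eq Fintype.card_ne_zero]
  obtain ⟨k, hk⟩ := exists_diagonal_of_invariant hφ hq hb hw hμinv
  have hzero : (P ^ (m + 1)) v = 0 := by
    rw [pow_succ, Module.End.mul_apply, hl, map_zero]
  have hk0 (j) : k j = 0 := by
    have h : ∑ j, (b.repr v j * k j) • b j = 0 := by
      rw [← hzero, hμ]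
      conv_rhs => rw [← b.sum_repr v, map_sum]
      simp [hk, smul_smul]
    have := Fintype.linearIndependent_iff.mp b.linearIndependent _ h j
    exact (mul_eq_zero.mp this).resolve_left (hv j)
  have he : P ^ (m + 1) = 0 := by
    rw [hμ]
    exact b.ext fun j ↦ by simp [hk, hk0]
  have hP0 : cyclicPoly φ l = cyclicPoly φ (0 : ZMod n → K) := by
    rw [← hP, ← hPpow, pow_succ, he]
    simp [cyclicPoly]
  exact congrFun (cyclicPoly_injective hw hP0)

theorem repr_zero_ne_zero_of_linearIndependent_pow_apply {q : ℕ} (hq : q.Coprime n)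
    (hb : ∀ j, φ (b j) = s j • b ((q : ZMod n) * j)) {v : V}
    (hv : LinearIndependent K fun i : ZMod n ↦ (φ ^ i.val) v) :
    b.repr v 0 ≠ 0 := by
  intro h0
  have hrank : finrank K V = n := by rw [finrank_eq_card_basis b, ZMod.card]
  let k : ZMod n → K := Pi.single 0 1
  have hk (j) : k ((q : ZMod n) * j) = k j := by
    have : (q : ZMod n) * j = 0 ↔ j = 0 := (ZMod.unitOfCoprime q hq).mul_right_eq_zero
    simp [k, Pi.single_apply, this]
  obtain ⟨l, hl⟩ := exists_cyclicPoly_eq_of_commute hrank hv (commute_constr_of_invariant hb hk)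
  have hTv : (b.constr K fun j ↦ k j • b j) v = 0 := by
    simp [Basis.constr_apply_fintype, k, Pi.single_apply, h0]
  rw [hl, cyclicPoly_apply] at hTv
  have hl0 := Fintype.linearIndependent_iff.mp hv l hTv
  have hT := LinearMap.congr_fun hl (b 0)
  simp [k, cyclicPoly, hl0, b.ne_zero] at hT

end CyclicEndomorphism

section PowerBasis

variable {K L : Type*} [Field K] [Field L] [Algebra K L] {n : ℕ}

lemma pow_mul_pow_val {A : K} {β : L} (hβ : β ^ n = algebraMap K L A) (k : ℕ) :
    β ^ k = A ^ (k / n) • β ^ (k : ZMod n).val := by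
  rw [ZMod.val_natCast, Algebra.smul_def, map_pow, ← hβ, ← pow_mul, ← pow_add, Nat.div_add_mod]

lemma exists_basis_pow_val [NeZero n] (hrank : finrank K L = n) {A : K}
    (hirr : Irreducible ((X : K[X]) ^ n - C A)) {β : L} (hβ : β ^ n = algebraMap K L A) :
    ∃ b : Basis (ZMod n) K L, ∀ j, b j = β ^ j.val := by
  have hmin : minpoly K β = X ^ n - C A :=
    (minpoly.eq_of_irreducible_of_monic hirr (by simp [hβ])
      (monic_X_pow_sub_C A (NeZero.ne n))).symm
  have hdeg : (minpoly K β).natDegree = n := by rw [hmin, natDegree_X_pow_sub_C]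
  have hli : LinearIndependent K fun j : ZMod n ↦ β ^ j.val :=
    (linearIndependent_pow (K := K) β).comp
      (fun j : ZMod n ↦ ⟨j.val, hdeg.symm ▸ ZMod.val_lt j⟩) fun i j h ↦
        ZMod.val_injective n (congrArg Fin.val h)
  exact ⟨basisOfLinearIndependentOfCardEqFinrank hli (by rw [ZMod.card, hrank]), fun j ↦ by simp⟩

lemma coprime_card_of_irreducible_X_pow_sub_C [Fintype K] {A : K}
    (hirr : Irreducible ((X : K[X]) ^ n - C A)) : (Fintype.card K).Coprime n := by
  obtain ⟨p, hp⟩ := CharP.exists K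
  obtain ⟨m, hprime, hcard⟩ := FiniteField.card K p
  rw [hcard]
  refine Nat.Coprime.pow_left _ ((Nat.Prime.coprime_iff_not_dvd hprime).mpr fun hdvd ↦ ?_)
  have hder := (separable_iff_derivative_ne_zero hirr).mp (PerfectField.separable_of_irreducible hirr)
  apply hder
  simp [derivative_X_pow, (CharP.cast_eq_zero_iff K p n).mpr hdvd]

lemma exists_linearIndependent_frobenius [Fintype K] [FiniteDimensional K L]
    (hrank : finrank K L = n) [NeZero n] :
    ∃ w : L, LinearIndependent K fun i : ZMod n ↦
      ((FiniteField.frobeniusAlgHom K L).toLinearMap ^ i.val) w := by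
  have : Finite L := Module.finite_of_finite K
  obtain ⟨w, hw⟩ := exists_linearIndependent_algEquiv_apply K L
  refine ⟨w, ?_⟩
  have hinj : Function.Injective fun i : ZMod n ↦
      FiniteField.frobeniusAlgEquivOfAlgebraic K L ^ i.val := fun i j h ↦
    ZMod.val_injective n (pow_injOn_Iio_orderOf
      (by simpa [FiniteField.orderOf_frobeniusAlgEquivOfAlgebraic, hrank] using ZMod.val_lt i)
      (by simpa [FiniteField.orderOf_frobeniusAlgEquivOfAlgebraic, hrank] using ZMod.val_lt j) h)
  convert hw.comp _ hinj using 2 with i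
  simp [Module.End.pow_apply, AlgEquiv.coe_pow, FiniteField.coe_frobeniusAlgEquivOfAlgebraic,
    FiniteField.coe_frobeniusAlgHom]

/-- Criterion for an element of a finite extension generated by a root `β` of an irreducible
binomial to be normal, when all its coordinates on positive powers of `β` are nonzero. -/
theorem linearIndependent_frobenius_iff [Fintype K] [NeZero n] (hrank : finrank K L = n) {A : K}
    (hirr : Irreducible ((X : K[X]) ^ n - C A)) {β : L} (hβ : β ^ n = algebraMap K L A)
    {b : Basis (ZMod n) K L} (hb : ∀ j, b j = β ^ j.val) {α : L}
    (hα : ∀ j, j ≠ 0 → b.repr α j ≠ 0) :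
    (LinearIndependent K fun i : ZMod n ↦ α ^ Fintype.card K ^ i.val) ↔ b.repr α 0 ≠ 0 := by
  have : FiniteDimensional K L := b.finiteDimensional_of_finite
  have : Finite L := Module.finite_of_finite K
  let φ := (FiniteField.frobeniusAlgHom K L).toLinearMap
  have hφpow (i : ℕ) (x : L) : (φ ^ i) x = x ^ Fintype.card K ^ i := by
    simp [φ, Module.End.pow_apply, FiniteField.coe_frobeniusAlgHom]
  have hφ : φ ^ n = 1 := by
    have : Fintype L := Fintype.ofFinite L
    ext x
    rw [hφpow, ← hrank, ← Module.card_eq_pow_finrank, FiniteField.pow_card, Module.End.one_apply]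
  have hq := coprime_card_of_irreducible_X_pow_sub_C hirr
  have hφb (j : ZMod n) : φ (b j) =
      A ^ (Fintype.card K * j.val / n) • b ((Fintype.card K : ZMod n) * j) := by
    have h := pow_mul_pow_val hβ (Fintype.card K * j.val)
    rw [Nat.cast_mul, ZMod.natCast_rightInverse] at h
    rw [hb, hb, ← h, mul_comm, pow_mul]
    simp [φ]
  obtain ⟨w, hw⟩ := exists_linearIndependent_frobenius (K := K) hrank
  simp only [← hφpow]
  refine ⟨repr_zero_ne_zero_of_linearIndependent_pow_apply hq hφb, fun h0 ↦ ?_⟩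
  refine linearIndependent_pow_apply_of_forall_repr_ne_zero hφ hq hφb hw fun j ↦ ?_
  by_cases hj : j = 0
  · rwa [hj]
  · exact hα j hj

lemma sum_zmod_val {M : Type*} [AddCommMonoid M] [NeZero n] (f : ℕ → M) :
    ∑ j : ZMod n, f j.val = ∑ j ∈ Finset.range n, f j := by
  cases n with
  | zero => exact absurd rfl (NeZero.ne 0)
  | succ m => exact Fin.sum_univ_eq_sum_range f (m + 1)

lemma linearIndependent_zmod_val_iff [NeZero n] (f : ℕ → L) :
    (LinearIndependent K fun i : ZMod n ↦ f i.val) ↔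
      LinearIndependent K fun i : Fin n ↦ f i := by
  cases n with
  | zero => exact absurd rfl (NeZero.ne 0)
  | succ m => exact Iff.rfl

lemma exists_basis_eq_iff_linearIndependent [NeZero n] (hrank : finrank K L = n) (f : Fin n → L) :
    (∃ b : Basis (Fin n) K L, ∀ i, b i = f i) ↔ LinearIndependent K f :=
  ⟨fun ⟨b, hb⟩ ↦ funext hb ▸ b.linearIndependent, fun h ↦
    ⟨basisOfLinearIndependentOfCardEqFinrank h (by rw [Fintype.card_fin, hrank]), fun i ↦ by simp⟩⟩

lemma mul_repr_of_mobius [NeZero n] {A : K} {β : L} (hβ : β ^ n = algebraMap K L A)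
    {B : Basis (ZMod n) K L} (hB : ∀ j, B j = β ^ j.val) {a b c d : K} {α : L}
    (hα : (algebraMap K L a - algebraMap K L c * β) * α = algebraMap K L d * β - algebraMap K L b)
    (j : ZMod n) :
    c * (a ^ n - c ^ n * A) * B.repr α j =
      (if j = 0 then -(d * (a ^ n - c ^ n * A)) else 0) +
        (a * d - b * c) * (a ^ (n - 1 - j.val) * c ^ j.val) := by
  have hgeom := (Commute.all (algebraMap K L c * β) (algebraMap K L a)).mul_geom_sum₂ n
  rw [mul_pow, hβ] at hgeom
  have key : (c * (a ^ n - c ^ n * A)) • α = (-(d * (a ^ n - c ^ n * A))) • B 0 +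
      (a * d - b * c) • ∑ j : ZMod n, (a ^ (n - 1 - j.val) * c ^ j.val) • B j := by
    simp only [hB]
    rw [sum_zmod_val fun j ↦ (a ^ (n - 1 - j) * c ^ j) • β ^ j]
    have hsum : ∑ j ∈ Finset.range n, (a ^ (n - 1 - j) * c ^ j) • β ^ j =
        ∑ j ∈ Finset.range n, (algebraMap K L c * β) ^ j * algebraMap K L a ^ (n - 1 - j) :=
      Finset.sum_congr rfl fun j _ ↦ by
        simp only [Algebra.smul_def, map_mul, map_pow]
        ring
    rw [hsum]
    set S := ∑ j ∈ Finset.range n, (algebraMap K L c * β) ^ j * algebraMap K L a ^ (n - 1 - j)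
    simp only [Algebra.smul_def, map_mul, map_sub, map_neg, map_pow, ZMod.val_zero, pow_zero]
    linear_combination (algebraMap K L c * α + algebraMap K L d) * hgeom +
      algebraMap K L c * S * hα
  have h := congrArg (fun x ↦ B.repr x j) key
  simp only [map_smul, map_add, Finsupp.smul_apply, Finsupp.add_apply, smul_eq_mul, B.repr_self,
    Finsupp.single_apply, B.repr_sum_self, eq_comm (a := (0 : ZMod n))] at h
  rw [h]
  split_ifs <;> simp

end PowerBasis

lemma Pmat_X_pow_sub_C {K : Type} [Field K] (a b c d A : K) {n : ℕ} (hn : n ≠ 0) :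
    Pmat a b c d ((X : K[X]) ^ n - C A) = (C a * X + C b) ^ n - C A * (C c * X + C d) ^ n := by
  rw [Pmat, natDegree_X_pow_sub_C, Finset.sum_range_succ,
    Finset.sum_eq_single_of_mem 0 (by simpa using Nat.pos_of_ne_zero hn)]
  · simp [coeff_X_pow, coeff_C, hn, hn.symm]
    ring
  · intro i hi hi0
    simp [coeff_X_pow, coeff_C, hi0, (Finset.mem_range.mp hi).ne]

/-- Main Lemma, case `ac ≠ 0`: with `f = x^n - A` irreducible, `f(a/c) ≠ 0`
(i.e. `c^n A ≠ a^n`), `g = P_σ(f)` and `α` a root of `g`, the element `α` is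
normal over `F_q` iff `c^{n-1} d A - b a^{n-1} ≠ 0`. -/
theorem stmt_7 (K L : Type) [Field K] [Fintype K] [Field L] [Algebra K L]
    (q n : ℕ) (hq : Fintype.card K = q) (hrank : Module.finrank K L = n)
    (a b c d A : K) (ha : a ≠ 0) (hc : c ≠ 0) (hdet : a * d - b * c ≠ 0)
    (hirr : Irreducible ((X : Polynomial K) ^ n - C A))
    (hinf : c ^ n * A ≠ a ^ n)
    (α : L) (hα : aeval α (Pmat a b c d ((X : Polynomial K) ^ n - C A)) = 0) :
    (∃ bas : Basis (Fin n) K L, ∀ i : Fin n, bas i = α ^ q ^ (i : ℕ)) ↔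
      c ^ (n - 1) * d * A - b * a ^ (n - 1) ≠ 0 := by
  have hn : n ≠ 0 := by
    rintro rfl
    have := hirr.natDegree_pos
    simp [← C_1, ← C_sub, -map_sub, -map_one] at this
  have : NeZero n := ⟨hn⟩
  subst hq
  rw [Pmat_X_pow_sub_C a b c d A hn] at hα
  simp only [map_sub, map_mul, map_pow, map_add, aeval_C, aeval_X] at hα
  have hdet' : algebraMap K L a * algebraMap K L d - algebraMap K L b * algebraMap K L c ≠ 0 := by
    simpa only [map_sub, map_mul] using (map_ne_zero (algebraMap K L)).mpr hdet
  have hden : algebraMap K L c * α + algebraMap K L d ≠ 0 := by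
    intro h
    rw [h, zero_pow hn, mul_zero, sub_zero] at hα
    have h' := pow_eq_zero_iff hn |>.mp hα
    apply hdet'
    linear_combination algebraMap K L a * h - algebraMap K L c * h'
  set β : L := (algebraMap K L a * α + algebraMap K L b) / (algebraMap K L c * α + algebraMap K L d)
    with hβdef
  have hβ : β ^ n = algebraMap K L A := by
    rw [hβdef, div_pow, div_eq_iff (pow_ne_zero n hden)]
    exact sub_eq_zero.mp hα
  have hmob : (algebraMap K L a - algebraMap K L c * β) * α =
      algebraMap K L d * β - algebraMap K L b := by
    rw [hβdef]
    field_simp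
    ring
  obtain ⟨B, hB⟩ := exists_basis_pow_val hrank hirr hβ
  have hrepr := mul_repr_of_mobius hβ hB hmob
  have hD : c * (a ^ n - c ^ n * A) ≠ 0 := mul_ne_zero hc (sub_ne_zero.mpr hinf.symm)
  have hpos (j : ZMod n) (hj : j ≠ 0) : B.repr α j ≠ 0 := by
    refine right_ne_zero_of_mul (a := c * (a ^ n - c ^ n * A)) ?_
    rw [hrepr, if_neg hj, zero_add]
    exact mul_ne_zero hdet (mul_ne_zero (pow_ne_zero _ ha) (pow_ne_zero _ hc))
  have hzero : (a ^ n - c ^ n * A) * B.repr α 0 = c ^ (n - 1) * d * A - b * a ^ (n - 1) := by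
    have h := hrepr 0
    have han : a ^ n = a ^ (n - 1) * a := (pow_sub_one_mul hn a).symm
    have hcn : c ^ n = c ^ (n - 1) * c := (pow_sub_one_mul hn c).symm
    rw [if_pos rfl, ZMod.val_zero, Nat.sub_zero, pow_zero] at h
    refine mul_left_cancel₀ hc ?_
    rw [← mul_assoc, h, han, hcn]
    ring
  rw [exists_basis_eq_iff_linearIndependent hrank,
    ← linearIndependent_zmod_val_iff fun i ↦ α ^ Fintype.card K ^ i,
    linearIndependent_frobenius_iff hrank hirr hβ hB hpos, ← hzero,
    mul_ne_zero_iff_left (right_ne_zero_of_mul hD)]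
end

section
/- Let σ = [[a,b],[c,d]] ∈ GL_2(F_q) with ac ≠ 0, and f(x) = x^n - A irreducible over F_q with a^n - c^n A ≠ 0. Let α be a root of g = P_σ(f) in F_{q^n}. Then the trace of α from F_{q^n} to F_q equals n·(c^{n-1} d A - b a^{n-1})/(a^n - c^n A). In particular, α is normal over F_q if and only if Tr_{F_{q^n}/F_q}(α) ≠ 0. -/
open Polynomial Module

section CyclicOperator

theorem pow_zmod_val_natCast {M : Type*} [Monoid M] {n : ℕ} {x : M} (hx : x ^ n = 1) (m : ℕ) :
    x ^ (m : ZMod n).val = x ^ m := by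
  rw [ZMod.val_natCast, ← pow_eq_pow_mod m hx]

variable {K V : Type*} [Field K] [AddCommGroup V] [Module K V] {n : ℕ} [NeZero n]

/-- The combination `∑ i, c i • Φ ^ i` of powers of an endomorphism, indexed by `ZMod n`. -/
noncomputable def cyclicComb (Φ : End K V) (c : ZMod n → K) : End K V :=
  ∑ i, c i • Φ ^ i.val

theorem cyclicComb_eq_aeval (Φ : End K V) (c : ZMod n → K) :
    cyclicComb Φ c = aeval Φ (∑ i, C (c i) * X ^ i.val) := by
  simp [cyclicComb, Algebra.smul_def]

theorem cyclicComb_injective {Φ : End K V} {v : V}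
    (hv : LinearIndependent K fun i : ZMod n => (Φ ^ i.val) v) :
    Function.Injective (cyclicComb Φ : (ZMod n → K) → End K V) := by
  intro c c' h
  have h0 := congrArg (fun T : End K V => T v) h
  simp only [cyclicComb, LinearMap.sum_apply, LinearMap.smul_apply] at h0
  have := Fintype.linearIndependent_iff.1 hv (fun i => c i - c' i)
    (by simp only [sub_smul, Finset.sum_sub_distrib, h0, sub_self])
  exact funext fun i => sub_eq_zero.1 (this i)

theorem commute_aeval_self (Φ : End K V) (p : K[X]) : Commute (aeval Φ p) Φ := by
  simpa using (Polynomial.commute_X p).symm.map (aeval Φ)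

theorem exists_eq_cyclicComb {Φ : End K V} {v : V} (b : Basis (ZMod n) K V)
    (hb : ∀ i, b i = (Φ ^ i.val) v) {T : End K V} (hT : Commute T Φ) :
    ∃ c : ZMod n → K, T = cyclicComb Φ c := by
  refine ⟨fun i => b.repr (T v) i, b.ext fun i => ?_⟩
  have hcomm : Commute (cyclicComb Φ fun i => b.repr (T v) i) (Φ ^ i.val) := by
    rw [cyclicComb_eq_aeval]
    exact (commute_aeval_self Φ _).pow_right _
  have hv : cyclicComb Φ (fun i => b.repr (T v) i) v = T v := by
    conv_rhs => rw [← b.sum_repr (T v)]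
    simp [cyclicComb, LinearMap.sum_apply, hb]
  rw [hb, ← Module.End.mul_apply, ← Module.End.mul_apply, (hT.pow_right _).eq, hcomm.eq,
    Module.End.mul_apply, Module.End.mul_apply, hv]

/-- The endomorphism acting on a basis diagonally. -/
noncomputable def diagEnd (e : Basis (ZMod n) K V) (h : ZMod n → K) : End K V :=
  e.constr K fun j => h j • e j

theorem diagEnd_basis (e : Basis (ZMod n) K V) (h : ZMod n → K) (j : ZMod n) :
    diagEnd e h (e j) = h j • e j := by
  simp [diagEnd]

theorem repr_diagEnd (e : Basis (ZMod n) K V) (h : ZMod n → K) (x : V) (j : ZMod n) :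
    e.repr (diagEnd e h x) j = h j * e.repr x j := by
  have : e.coord j ∘ₗ diagEnd e h = h j • e.coord j := e.ext fun i => by
    by_cases hij : i = j <;> simp [diagEnd_basis, hij]
  simpa using! congrArg (fun T : V →ₗ[K] K => T x) this

theorem diagEnd_injective (e : Basis (ZMod n) K V) :
    Function.Injective (diagEnd e) := by
  intro h h' hh
  funext j
  have := congrArg (fun T : End K V => e.repr (T (e j)) j) hh
  simpa [diagEnd_basis] using this

theorem diagEnd_pow (e : Basis (ZMod n) K V) (h : ZMod n → K) (k : ℕ) :
    diagEnd e h ^ k = diagEnd e (h ^ k) := by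
  induction k with
  | zero => exact e.ext fun j => by simp [diagEnd_basis]
  | succ k ih =>
    refine e.ext fun j => ?_
    rw [pow_succ, Module.End.mul_apply, diagEnd_basis, map_smul, ih, diagEnd_basis,
      diagEnd_basis, smul_smul, Pi.pow_apply, Pi.pow_apply, pow_succ']

variable [Fintype K]

theorem aeval_pow_card (Φ : End K V) (p : K[X]) :
    aeval Φ p ^ Fintype.card K = aeval (Φ ^ Fintype.card K) p := by
  rw [← map_pow, ← FiniteField.expand_card, expand_aeval]

theorem aeval_pow_card_pow (Φ : End K V) (p : K[X]) (k : ℕ) :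
    aeval Φ p ^ Fintype.card K ^ k = aeval (Φ ^ Fintype.card K ^ k) p := by
  induction k with
  | zero => simp
  | succ k ih => rw [pow_succ, pow_mul, ih, aeval_pow_card, ← pow_mul]

/-- The coefficients of a Frobenius-fixed combination are constant along the orbits of
multiplication by the cardinality of the base field. -/
theorem cyclicComb_coeff_eq {Φ : End K V} (hΦ : Φ ^ n = 1) {v : V}
    (hv : LinearIndependent K fun i : ZMod n => (Φ ^ i.val) v)
    (u : (ZMod n)ˣ) (hu : (u : ZMod n) = Fintype.card K) {c : ZMod n → K}
    (hc : cyclicComb Φ c ^ Fintype.card K = cyclicComb Φ c) (i : ZMod n) :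
    c (u * i) = c i := by
  have h1 : cyclicComb Φ c ^ Fintype.card K =
      cyclicComb Φ fun i : ZMod n => c (((u⁻¹ : (ZMod n)ˣ) : ZMod n) * i) := by
    rw [cyclicComb_eq_aeval, aeval_pow_card, cyclicComb,
      ← Equiv.sum_comp (Units.mulLeft u) fun i => c (((u⁻¹ : (ZMod n)ˣ) : ZMod n) * i) • Φ ^ i.val]
    simp only [map_sum, map_mul, aeval_C, map_pow, aeval_X, Units.mulLeft_apply,
      Units.inv_mul_cancel_left, ← Algebra.smul_def]
    refine Finset.sum_congr rfl fun i _ => ?_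
    rw [← pow_mul, ← pow_zmod_val_natCast hΦ (Fintype.card K * i.val)]
    simp [hu]
  have h2 := congrFun (cyclicComb_injective hv (h1.symm.trans hc)) ((u : ZMod n) * i)
  simpa using h2.symm

/-- Let `Φ` be a cyclic operator of order `n` that permutes the lines of a basis `e` via
multiplication by `q = #K` on `ZMod n`. Then every endomorphism in `K[Φ]` fixed by the `q`-power
map is diagonal in the basis `e`. -/
theorem exists_eq_diagEnd {Φ : End K V} (hΦ : Φ ^ n = 1) {v : V} (b : Basis (ZMod n) K V)
    (hb : ∀ i, b i = (Φ ^ i.val) v) (u : (ZMod n)ˣ) (hu : (u : ZMod n) = Fintype.card K)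
    (e : Basis (ZMod n) K V) (s : ZMod n → K) (he : ∀ j, Φ (e j) = s j • e (u * j))
    {T : End K V} (hT : Commute T Φ) (hTq : T ^ Fintype.card K = T) :
    ∃ h : ZMod n → K, T = diagEnd e h := by
  have hv : LinearIndependent K fun i : ZMod n => (Φ ^ i.val) v := by
    simpa only [← hb] using! b.linearIndependent
  let H := {h : ZMod n → K // ∀ j, h (u * j) = h j}
  have hcomm (h : H) : Commute (diagEnd e h.1) Φ := by
    refine e.ext fun j => ?_
    rw [Module.End.mul_apply, Module.End.mul_apply, he, map_smul, diagEnd_basis, h.2,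
      diagEnd_basis, map_smul, he, smul_comm]
  have hfix (h : H) : diagEnd e h.1 ^ Fintype.card K = diagEnd e h.1 := by
    rw [diagEnd_pow]
    congr 1
    funext j
    exact FiniteField.pow_card (h.1 j)
  choose c hc using fun h : H => exists_eq_cyclicComb b hb (hcomm h)
  let F : H → H := fun h =>
    ⟨c h, cyclicComb_coeff_eq hΦ hv u hu (by rw [← hc, hfix])⟩
  have hF : Function.Injective F := fun h h' hh => by
    refine Subtype.ext (diagEnd_injective e ?_)
    rw [hc h, hc h', show c h = c h' from congrArg Subtype.val hh]
  obtain ⟨c', rfl⟩ := exists_eq_cyclicComb b hb hT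
  obtain ⟨h, hh⟩ := Finite.surjective_of_injective hF
    ⟨c', cyclicComb_coeff_eq hΦ hv u hu hTq⟩
  exact ⟨h.1, by rw [hc h, show c h = c' from congrArg Subtype.val hh]⟩

/-- Under the hypotheses of `exists_eq_diagEnd`, a vector all of whose coordinates in the basis `e`
are nonzero has trivial annihilator in `K[Φ]`. -/
theorem aeval_eq_zero_of_aeval_apply_eq_zero {Φ : End K V} (hΦ : Φ ^ n = 1) {v : V}
    (b : Basis (ZMod n) K V) (hb : ∀ i, b i = (Φ ^ i.val) v)
    (u : (ZMod n)ˣ) (hu : (u : ZMod n) = Fintype.card K)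
    (e : Basis (ZMod n) K V) (s : ZMod n → K) (he : ∀ j, Φ (e j) = s j • e (u * j))
    {w : V} (hw : ∀ j, e.repr w j ≠ 0) {p : K[X]} (hp : aeval Φ p w = 0) :
    aeval Φ p = 0 := by
  set k := n.totient with hk
  set q := Fintype.card K with hq
  have hk0 : k ≠ 0 := (Nat.totient_pos.2 (NeZero.pos n)).ne'
  obtain ⟨r, hr⟩ : ∃ r, q ^ k = r + 2 := Nat.exists_eq_add_of_le' <|
    (Fintype.one_lt_card (α := K)).trans_le (Nat.le_self_pow hk0 _)
  have hper : aeval Φ p ^ (r + 2) = aeval Φ p := by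
    rw [← hr, aeval_pow_card_pow, ← pow_zmod_val_natCast hΦ]
    have : ((q ^ k : ℕ) : ZMod n) = ((1 : ℕ) : ZMod n) := by
      rw [Nat.cast_pow, ← hu, ← Units.val_pow_eq_pow_val, ZMod.pow_totient]
      simp
    rw [this, pow_zmod_val_natCast hΦ, pow_one]
  have hidem : IsIdempotentElem (aeval Φ p ^ (r + 1)) := by
    rw [IsIdempotentElem, ← pow_add, show r + 1 + (r + 1) = r + 2 + r by ring, pow_add, hper,
      ← pow_succ']
  have hfix : (aeval Φ p ^ (r + 1)) ^ q = aeval Φ p ^ (r + 1) :=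
    hidem.pow_eq Fintype.card_ne_zero
  obtain ⟨h, hh⟩ := exists_eq_diagEnd hΦ b hb u hu e s he
    ((commute_aeval_self Φ p).pow_left (r + 1)) hfix
  have h0 : h = 0 := by
    funext j
    have hz : (aeval Φ p ^ (r + 1)) w = 0 := by
      rw [pow_succ, Module.End.mul_apply, hp, map_zero]
    have := repr_diagEnd e h w j
    rw [← hh, hz, map_zero, Finsupp.zero_apply, eq_comm, mul_eq_zero] at this
    exact this.resolve_right (hw j)
  rw [← hper, pow_succ, hh, h0, show diagEnd e 0 = 0 from e.ext fun j => by simp [diagEnd_basis],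
    zero_mul]

end CyclicOperator

section RadicalExtension

theorem sum_range_eq_sum_zmod {M : Type*} [AddCommMonoid M] {n : ℕ} [NeZero n] (f : ℕ → M) :
    ∑ i ∈ Finset.range n, f i = ∑ j : ZMod n, f j.val := by
  obtain ⟨m, rfl⟩ := Nat.exists_eq_succ_of_ne_zero (NeZero.ne n)
  exact (Fin.sum_univ_eq_sum_range f _).symm

variable {K L : Type*} [Field K] [Field L] [Algebra K L] {n : ℕ}

theorem pow_eq_smul_basis {A : K} {β : L} (hβ : β ^ n = algebraMap K L A)
    {e : Basis (ZMod n) K L} (he : ∀ j, e j = β ^ j.val) (m : ℕ) :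
    β ^ m = A ^ (m / n) • e (m : ZMod n) := by
  rw [he, ZMod.val_natCast, Algebra.smul_def, map_pow, ← hβ, ← pow_mul, ← pow_add,
    Nat.div_add_mod]

variable [NeZero n]

theorem exists_basis_pow_of_irreducible (hrank : finrank K L = n) {A : K}
    (hirr : Irreducible ((X : K[X]) ^ n - C A)) {β : L} (hβ : β ^ n = algebraMap K L A) :
    ∃ e : Basis (ZMod n) K L, ∀ j, e j = β ^ j.val := by
  have hmin : minpoly K β = X ^ n - C A :=
    (minpoly.eq_of_irreducible_of_monic hirr (by simp [hβ])
      (monic_X_pow_sub_C A (NeZero.ne n))).symm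
  have hdeg : n = (minpoly K β).natDegree := by rw [hmin, natDegree_X_pow_sub_C]
  have hli : LinearIndependent K fun j : ZMod n => β ^ j.val :=
    (linearIndependent_pow (K := K) β).comp
      (fun j : ZMod n => (⟨j.val, hdeg ▸ j.val_lt⟩ : Fin (minpoly K β).natDegree))
      fun i j hij => ZMod.val_injective n (congrArg Fin.val hij)
  exact ⟨basisOfLinearIndependentOfCardEqFinrank hli (by rw [ZMod.card, hrank]), fun j => by simp⟩

theorem trace_basis_eq_zero {A : K} {β : L} (hβ : β ^ n = algebraMap K L A)
    {e : Basis (ZMod n) K L} (he : ∀ j, e j = β ^ j.val) {j : ZMod n} (hj : j ≠ 0) :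
    Algebra.trace K L (e j) = 0 := by
  rw [Algebra.trace_eq_matrix_trace e, Matrix.trace]
  refine Finset.sum_eq_zero fun i _ => ?_
  rw [Matrix.diag_apply, Algebra.leftMulMatrix_eq_repr_mul, he, he, ← pow_add,
    pow_eq_smul_basis hβ he]
  simp [hj]

theorem exists_basis_frobenius [Fintype K] (hrank : finrank K L = n) :
    ∃ (v : L) (b : Basis (ZMod n) K L),
      ∀ i, b i = ((FiniteField.frobeniusAlgHom K L).toLinearMap ^ i.val) v := by
  have : FiniteDimensional K L := .of_finrank_pos (hrank ▸ NeZero.pos n)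
  have : Finite L := Module.finite_of_finite K
  have hbij : Function.Bijective
      fun i : ZMod n => FiniteField.frobeniusAlgEquivOfAlgebraic K L ^ i.val := by
    refine Function.Injective.bijective_of_nat_card_le (fun i j hij => ?_) ?_
    · refine ZMod.val_injective n (pow_injOn_Iio_orderOf ?_ ?_ hij) <;>
      · rw [Set.mem_Iio, FiniteField.orderOf_frobeniusAlgEquivOfAlgebraic, hrank]
        exact ZMod.val_lt _
    · rw [IsGalois.card_aut_eq_finrank, hrank, Nat.card_zmod]
  refine ⟨IsGalois.normalBasis K L 1,
    (IsGalois.normalBasis K L).reindex (Equiv.ofBijective _ hbij).symm, fun i => ?_⟩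
  rw [Basis.reindex_apply, IsGalois.normalBasis_apply]
  simp [Module.End.coe_pow, AlgEquiv.coe_pow, FiniteField.coe_frobeniusAlgEquivOfAlgebraic,
    FiniteField.coe_frobeniusAlgHom]

end RadicalExtension

theorem natCast_ne_zero_of_irreducible_X_pow_sub_C {K : Type*} [Field K] [Finite K] {n : ℕ} {A : K}
    (hirr : Irreducible ((X : K[X]) ^ n - C A)) : (n : K) ≠ 0 := by
  intro h
  have hsep : IsCoprime _ _ := PerfectField.separable_of_irreducible hirr
  rw [derivative_sub, derivative_X_pow, derivative_C, h, map_zero, zero_mul, sub_zero,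
    isCoprime_zero_right] at hsep
  exact hirr.not_isUnit hsep

theorem card_coprime_of_natCast_ne_zero {K : Type*} [Field K] [Fintype K] {n : ℕ}
    (hn : (n : K) ≠ 0) : (Fintype.card K).Coprime n := by
  obtain ⟨p, _⟩ := CharP.exists K
  obtain ⟨k, hp, hk⟩ := FiniteField.card K p
  rw [hk]
  refine Nat.Coprime.pow_left _ ((hp.coprime_iff_not_dvd).2 fun h => hn ?_)
  exact (CharP.cast_eq_zero_iff K p n).2 h

theorem aeval_Pmat_X_pow_sub_C {K L : Type} [Field K] [Field L] [Algebra K L] {n : ℕ}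
    (a b c d A : K) (α : L) :
    aeval α (Pmat a b c d (X ^ n - C A)) =
      (algebraMap K L a * α + algebraMap K L b) ^ n -
        algebraMap K L A * (algebraMap K L c * α + algebraMap K L d) ^ n := by
  rw [Pmat, natDegree_X_pow_sub_C]
  simp only [coeff_sub, coeff_X_pow, coeff_C, C_sub, sub_mul, Finset.sum_sub_distrib]
  rw [Finset.sum_eq_single n (fun i _ hi => by simp [hi]) (by simp),
    Finset.sum_eq_single 0 (fun i _ hi => by simp [hi]) (by simp)]
  simp

/-- The expansion of `α = (d β - b) / (a - c β)` in powers of `β`, cleared of denominators. -/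
theorem smul_eq_sum_basis {K L : Type*} [Field K] [Field L] [Algebra K L] {n : ℕ} [NeZero n]
    {a b c d A : K} {α β : L} (hβ : β ^ n = algebraMap K L A)
    {e : Basis (ZMod n) K L} (he : ∀ j, e j = β ^ j.val) (hinf : a ^ n - c ^ n * A ≠ 0)
    (hα : (algebraMap K L a - algebraMap K L c * β) * α =
      algebraMap K L d * β - algebraMap K L b) :
    (c * (a ^ n - c ^ n * A)) • α = ∑ j : ZMod n,
      ((if j = 0 then -(d * (a ^ n - c ^ n * A)) else 0) +
        (a * d - b * c) * (c ^ j.val * a ^ (n - 1 - j.val))) • e j := by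
  set φ := algebraMap K L
  have hgeom : (∑ i ∈ Finset.range n, (φ c * β) ^ i * φ a ^ (n - 1 - i)) * (φ c * β - φ a) =
      φ c ^ n * φ A - φ a ^ n := by
    rw [(Commute.all _ _).geom_sum₂_mul, mul_pow, hβ]
  set S := ∑ i ∈ Finset.range n, (φ c * β) ^ i * φ a ^ (n - 1 - i) with hS
  have hSsum : ∑ j : ZMod n, (c ^ j.val * a ^ (n - 1 - j.val)) • e j = S := by
    rw [hS, sum_range_eq_sum_zmod]
    refine Finset.sum_congr rfl fun j _ => ?_
    rw [he, Algebra.smul_def, map_mul, map_pow, map_pow, mul_pow]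
    ring
  have hne : φ a - φ c * β ≠ 0 := fun h => hinf <| (algebraMap K L).injective <| by
    rw [map_zero, map_sub, map_mul, map_pow, map_pow]
    linear_combination S * h + hgeom
  simp only [add_smul, ite_smul, zero_smul, Finset.sum_add_distrib, mul_smul _ (_ * _)]
  rw [← Finset.smul_sum, hSsum, Finset.sum_ite_eq' Finset.univ 0, if_pos (Finset.mem_univ _), he]
  simp only [Algebra.smul_def, ZMod.val_zero, pow_zero, mul_one, map_neg, map_mul, map_sub,
    map_pow]
  refine mul_left_cancel₀ hne ?_
  linear_combination (φ c * (φ a ^ n - φ c ^ n * φ A)) * hα + (φ a * φ d - φ b * φ c) * hgeom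

/-- With `ac ≠ 0`, `f = x^n - A` irreducible, `a^n - c^n A ≠ 0` and `α` a root of
`g = P_σ(f)` in `F_{q^n}`: the trace of `α` equals `n (c^{n-1} d A - b a^{n-1})/(a^n - c^n A)`;
in particular `α` is normal over `F_q` iff `Tr(α) ≠ 0`. -/
theorem stmt_8 (K L : Type) [Field K] [Fintype K] [Field L] [Algebra K L]
    (q n : ℕ) (hq : Fintype.card K = q) (hrank : Module.finrank K L = n)
    (a b c d A : K) (ha : a ≠ 0) (hc : c ≠ 0) (hdet : a * d - b * c ≠ 0)
    (hirr : Irreducible ((X : Polynomial K) ^ n - C A))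
    (hinf : a ^ n - c ^ n * A ≠ 0)
    (α : L) (hα : aeval α (Pmat a b c d ((X : Polynomial K) ^ n - C A)) = 0) :
    Algebra.trace K L α =
        (n : K) * ((c ^ (n - 1) * d * A - b * a ^ (n - 1)) / (a ^ n - c ^ n * A)) ∧
      ((∃ bas : Basis (Fin n) K L, ∀ i : Fin n, bas i = α ^ q ^ (i : ℕ)) ↔
        Algebra.trace K L α ≠ 0) := by
  subst hq
  have hn : (n : K) ≠ 0 := natCast_ne_zero_of_irreducible_X_pow_sub_C hirr
  have hn0 : n ≠ 0 := fun h => hn (by simp [h])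
  have : NeZero n := ⟨hn0⟩
  have : FiniteDimensional K L := .of_finrank_pos (hrank ▸ NeZero.pos n)
  have : Finite L := Module.finite_of_finite K
  rw [aeval_Pmat_X_pow_sub_C, sub_eq_zero] at hα
  set φ := algebraMap K L with hφ
  have hden : φ c * α + φ d ≠ 0 := by
    intro h
    rw [h, zero_pow hn0, mul_zero, pow_eq_zero_iff hn0] at hα
    refine hdet ((algebraMap K L).injective ?_)
    rw [map_zero, map_sub, map_mul, map_mul]
    linear_combination φ a * h - φ c * hα
  obtain ⟨β, hβdef⟩ : ∃ β : L, β * (φ c * α + φ d) = φ a * α + φ b :=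
    ⟨_, div_mul_cancel₀ _ hden⟩
  have hβ : β ^ n = φ A :=
    mul_right_cancel₀ (pow_ne_zero n hden) (by rw [← mul_pow, hβdef, hα])
  obtain ⟨e, he⟩ := exists_basis_pow_of_irreducible hrank hirr hβ
  have hexp := smul_eq_sum_basis (b := b) (d := d) (α := α) hβ he hinf
    (by linear_combination -hβdef)
  set D := a ^ n - c ^ n * A with hD
  have hpow (x : K) : x ^ n = x * x ^ (n - 1) := (mul_pow_sub_one hn0 x).symm
  have htr : Algebra.trace K L α = n * ((c ^ (n - 1) * d * A - b * a ^ (n - 1)) / D) := by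
    have h := congrArg (Algebra.trace K L) hexp
    have he0 : Algebra.trace K L (e 0) = n := by
      rw [he, ZMod.val_zero, pow_zero, ← map_one (algebraMap K L), Algebra.trace_algebraMap,
        hrank, nsmul_one]
    rw [map_smul, map_sum, Finset.sum_eq_single 0
      (fun j _ hj => by rw [map_smul, trace_basis_eq_zero hβ he hj, smul_zero])
      (fun h => absurd (Finset.mem_univ _) h), map_smul, he0] at h
    simp only [if_true, ZMod.val_zero, pow_zero, one_mul, Nat.sub_zero, smul_eq_mul] at h
    rw [← mul_div_assoc, eq_div_iff hinf]
    refine mul_left_cancel₀ hc ?_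
    have h1 := hpow a
    have h2 := hpow c
    linear_combination h - n * d * hD - n * d * h1 + n * d * A * h2
  refine ⟨htr, fun ⟨bas, hbas⟩ h0 => ?_, fun h0 => ?_⟩
  · have hsum : ∑ i, (1 : K) • bas i = 0 := by
      have := FiniteField.algebraMap_trace_eq_sum_pow K L α
      rw [h0, map_zero, hrank, Nat.card_eq_fintype_card, Finset.sum_range] at this
      simp [hbas, ← this]
    exact one_ne_zero (Fintype.linearIndependent_iff.1 bas.linearIndependent _ hsum 0)
  · set Φ := (FiniteField.frobeniusAlgHom K L).toLinearMap with hΦdef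
    have hΦpow (k : ℕ) (x : L) : (Φ ^ k) x = x ^ Fintype.card K ^ k := by
      simp [Φ, Module.End.coe_pow, FiniteField.coe_frobeniusAlgHom]
    have hΦ : Φ ^ n = 1 := by
      ext x
      have := Fintype.ofFinite L
      rw [hΦpow, ← hrank, ← Module.card_eq_pow_finrank, FiniteField.pow_card, Module.End.one_apply]
    obtain ⟨v, bv, hbv⟩ := exists_basis_frobenius (K := K) (L := L) hrank
    let u := ZMod.unitOfCoprime _ (card_coprime_of_natCast_ne_zero hn)
    have heΦ (j : ZMod n) :
        Φ (e j) = A ^ (j.val * Fintype.card K / n) • e (u * j) := by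
      rw [← pow_one Φ, hΦpow, pow_one, he, ← pow_mul, pow_eq_smul_basis hβ he]
      simp [u, mul_comm]
    have hw (j : ZMod n) : e.repr ((c * D) • α) j ≠ 0 := by
      rw [hexp, Basis.repr_sum_self]
      by_cases hj : j = 0
      · subst hj
        simp only [if_true, ZMod.val_zero, pow_zero, one_mul, Nat.sub_zero]
        intro h
        refine h0 ?_
        rw [htr, mul_eq_zero, div_eq_zero_iff]
        refine .inr (.inl (mul_left_cancel₀ hc ?_))
        have h1 := hpow a
        have h2 := hpow c
        linear_combination h + d * hD + d * h1 - d * A * h2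
      · rw [if_neg hj, zero_add]
        exact mul_ne_zero hdet (mul_ne_zero (pow_ne_zero _ hc) (pow_ne_zero _ ha))
    have hli : LinearIndependent K fun i : Fin n => α ^ Fintype.card K ^ (i : ℕ) := by
      refine Fintype.linearIndependent_iff.2 fun g hg => ?_
      have hzero : aeval Φ (∑ i : Fin n, C (g i) * X ^ (i : ℕ)) = 0 := by
        refine aeval_eq_zero_of_aeval_apply_eq_zero hΦ bv hbv u (by simp [u]) e _ heΦ hw ?_
        rw [map_smul]
        simp [LinearMap.sum_apply, hΦpow, hg]
      have hcast : Function.Injective fun i : Fin n => ((i : ℕ) : ZMod n) := fun i j hij =>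
        Fin.ext <| by
          simpa [Nat.mod_eq_of_lt i.2, Nat.mod_eq_of_lt j.2] using congrArg ZMod.val hij
      refine Fintype.linearIndependent_iff.1 (bv.linearIndependent.comp _ hcast) g ?_
      have hbv' (i : Fin n) : bv (i : ℕ) = (Φ ^ (i : ℕ)) v := by
        rw [hbv, ← hΦdef, pow_zmod_val_natCast hΦ]
      simpa [LinearMap.sum_apply, hbv'] using congrArg (fun T : End K L => T v) hzero
    exact ⟨basisOfLinearIndependentOfCardEqFinrank hli (by rw [Fintype.card_fin, hrank]),
      fun i => by simp⟩
end

section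
/- Let q ≡ 1 (mod 4) be a prime power and g_1 = x^2 + ax + 1 irreducible over F_q. Define g_{k+1} = g_k^R where g^R(x) = (2x)^{deg g} g((x+1/x)/2). Then for every k ≥ 1, g_k is irreducible over F_q of degree 2^k, and every root of g_k is a completely normal element of F_{q^{2^k}} over F_q. -/
open Polynomial Module

/-- Cohen's R-transform: `g^R(x) = (2x)^{deg g} · g((x + 1/x)/2)` as a polynomial. -/
noncomputable def Rtrans {K : Type} [Field K] (g : Polynomial K) : Polynomial K :=
  ∑ i ∈ Finset.range (g.natDegree + 1),
    C (g.coeff i) * (X ^ 2 + 1) ^ i * (2 * X) ^ (g.natDegree - i)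

/-- Over a field in which `-1` is a square, `X ^ 2 ^ r - ζ` is irreducible for every nonsquare
`ζ`. -/
theorem irreducible_X_pow_two_pow_sub_C {F : Type*} [Field F] (r : ℕ)
    (hi : IsSquare (-1 : F)) {ζ : F} (hζ : ¬ IsSquare ζ) :
    Irreducible (X ^ 2 ^ r - C ζ : F[X]) := by
  induction r generalizing F with
  | zero => simpa using irreducible_X_sub_C ζ
  | succ r ih =>
    rw [pow_succ]
    refine X_pow_mul_sub_C_irreducible
      (X_pow_sub_C_irreducible_of_prime Nat.prime_two fun b hb => hζ ⟨b, by rw [← hb, sq]⟩) ?_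
    intro E _ _ x hx
    have hxi : IsIntegral F x := by
      by_contra h
      rw [minpoly.eq_zero h] at hx
      exact X_pow_sub_C_ne_zero two_pos ζ hx.symm
    refine ih (by simpa using hi.map (algebraMap F (IntermediateField.adjoin F {x}))) fun hsq => hζ ?_
    have hn := hsq.map (Algebra.norm F)
    rw [← IntermediateField.adjoin.powerBasis_gen hxi,
      Algebra.PowerBasis.norm_gen_eq_coeff_zero_minpoly] at hn
    simpa [IntermediateField.minpoly_gen, hx] using hi.mul hn

section LinearMap

variable {F V : Type*} [Field F] [AddCommGroup V] [Module F V]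

theorem dvd_of_irreducible_of_aeval_apply_eq_zero (f : Module.End F V) {p P : F[X]} {x : V}
    (hp : Irreducible p) (hx : x ≠ 0) (hpx : aeval f p x = 0) (hP : aeval f P x = 0) :
    p ∣ P := by
  by_contra h
  obtain ⟨u, v, huv⟩ := (hp.coprime_iff_not_dvd).2 h
  apply hx
  have := congrArg (fun g => aeval f g x) huv
  simpa [hpx, hP] using this.symm

/-- The annihilator of `x` is divisible by `X ^ (2 * M) - η ^ 2` as soon as its two components
for the factors `X ^ M - η` and `X ^ M + η` have the full annihilators. -/
theorem X_pow_sub_C_dvd_of_components (h2 : (2 : F) ≠ 0) (f : Module.End F V) {M : ℕ} {η : F}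
    (hη : η ≠ 0) {x : V} {P : F[X]} (hP : aeval f P x = 0)
    (h₁ : ∀ P : F[X], aeval f P (x + η⁻¹ • (f ^ M) x) = 0 → X ^ M - C η ∣ P)
    (h₂ : ∀ P : F[X], aeval f P (x - η⁻¹ • (f ^ M) x) = 0 → X ^ M - C (-η) ∣ P) :
    X ^ (2 * M) - C (η ^ 2) ∣ P := by
  have hc : aeval f P ((f ^ M) x) = 0 := by
    have : aeval f P * f ^ M = f ^ M * aeval f P := by
      have := Commute.all P (X ^ M : F[X])
      simpa using congrArg (aeval f) this.eq
    rw [← Module.End.mul_apply, this, Module.End.mul_apply, hP, map_zero]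
  have e : (X ^ (2 * M) - C (η ^ 2) : F[X]) = (X ^ M - C η) * (X ^ M - C (-η)) := by
    simp only [map_neg, map_pow]; ring
  rw [e]
  refine IsCoprime.mul_dvd ?_ (h₁ P (by simp [hP, hc])) (h₂ P (by simp [hP, hc]))
  refine ⟨-C ((2 * η)⁻¹), C ((2 * η)⁻¹), ?_⟩
  have : (C ((2 * η)⁻¹) * C (2 * η) : F[X]) = 1 := by
    rw [← C_mul, inv_mul_cancel₀ (mul_ne_zero h2 hη), C_1]
  rw [← this]
  simp only [map_neg, C_mul, C_ofNat]; ring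

end LinearMap

section Chain

variable {F L : Type*} [Field F] [Field L] [Algebra F L]

/-- A tower `α 0, …, α n` of elements with `α i = (α (i + 1) + (α (i + 1))⁻¹) / 2`, such that
`α (i + 1)` and its inverse are exchanged by `σ ^ 2 ^ i`. -/
structure IsReciprocalTower (σ : L →ₐ[F] L) (α : ℕ → L) (n : ℕ) : Prop where
  zero_ne_zero : α 0 ≠ 0
  zero_ne_one : α 0 ≠ 1
  zero_ne_neg_one : α 0 ≠ -1
  map_zero : σ (α 0) = α 0
  sq_add_one : ∀ i < n, α (i + 1) ^ 2 + 1 = 2 * α i * α (i + 1)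
  map_mul_self : ∀ i < n, (σ ^ 2 ^ i) (α (i + 1)) * α (i + 1) = 1

namespace IsReciprocalTower

variable {σ : L →ₐ[F] L} {α : ℕ → L} {n : ℕ}

theorem ne (h : IsReciprocalTower σ α n) (h2 : (2 : L) ≠ 0) {i : ℕ} (hi : i ≤ n) :
    α i ≠ 0 ∧ α i ≠ 1 ∧ α i ≠ -1 := by
  induction i with
  | zero => exact ⟨h.zero_ne_zero, h.zero_ne_one, h.zero_ne_neg_one⟩
  | succ i ih =>
    obtain ⟨-, h1, h1'⟩ := ih (by omega)
    have hr := h.sq_add_one i hi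
    refine ⟨fun e => ?_, fun e => h1 ?_, fun e => h1' ?_⟩
    · simp [e] at hr
    · rw [e] at hr
      exact mul_left_cancel₀ h2 (by linear_combination -hr)
    · rw [e] at hr
      exact mul_left_cancel₀ h2 (by linear_combination hr)

theorem mono (h : IsReciprocalTower σ α n) {m : ℕ} (hm : m ≤ n) : IsReciprocalTower σ α m where
  __ := h
  sq_add_one i hi := h.sq_add_one i (hi.trans_le hm)
  map_mul_self i hi := h.map_mul_self i (hi.trans_le hm)

/-- The twisted conjugate `η⁻¹ • σ ^ 2 ^ r` of an eigenvector `δ` is, up to sign,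
`δ * (α (r + 1))⁻¹`. -/
theorem mul_sq_eq_one (h : IsReciprocalTower σ α n) (h2 : (2 : F) ≠ 0) {r t a b : ℕ} (hr : r < n)
    {η : F} {δ : L} {c : F} (hη : (η ^ 2) ^ 2 ^ t = -1) (hδ : δ ≠ 0)
    (hσ : (σ ^ 2 ^ (r + 1)) δ = η ^ 2 • δ)
    (hpow : δ ^ 2 ^ (t + 1) = algebraMap F L c * (α (r + 1) - 1) ^ a * (α (r + 1) + 1) ^ b)
    (ha : Odd a) (hab : a + b = 2 ^ (t + 1)) :
    (η⁻¹ • (σ ^ 2 ^ r) δ * α (r + 1)) ^ 2 = δ ^ 2 := by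
  have h2L : (2 : L) ≠ 0 := by
    simpa only [map_ofNat] using (_root_.map_ne_zero (algebraMap F L)).2 h2
  obtain ⟨hα, -, -⟩ := h.ne h2L (i := r + 1) hr
  have hη0 : η ≠ 0 := by
    rintro rfl
    simp at hη
  set A := α (r + 1) with hA
  set τ := σ ^ 2 ^ r with hτ
  have hττ : τ (τ δ) = η ^ 2 • δ := by
    rw [← hσ, hτ, ← AlgHom.mul_apply, ← pow_add, pow_succ, mul_two]
  have hτA : τ A = A⁻¹ := eq_inv_of_mul_eq_one_left (h.map_mul_self r hr)
  set ω : L := η⁻¹ • τ δ * A / δ with hω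
  have hηpow : η ^ 2 ^ (t + 1) = -1 := by rw [pow_succ', pow_mul, hη]
  have hτpow : (τ δ) ^ 2 ^ (t + 1) * A ^ 2 ^ (t + 1) = - δ ^ 2 ^ (t + 1) := by
    rw [← map_pow, hpow]
    simp only [map_mul, map_pow, map_sub, map_add, map_one, AlgHom.commutes, hτA]
    rw [← hab, pow_add]
    have e1 : (A⁻¹ - 1) * A = -(A - 1) := by field_simp; ring
    have e2 : (A⁻¹ + 1) * A = A + 1 := by field_simp; ring
    calc _ = algebraMap F L c * ((A⁻¹ - 1) * A) ^ a * ((A⁻¹ + 1) * A) ^ b := by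
          rw [mul_pow, mul_pow]; ring
      _ = _ := by rw [e1, e2, ha.neg_pow]; ring
  have hωpow : ω ^ 2 ^ (t + 1) = 1 := by
    rw [hω, div_pow, mul_pow, _root_.smul_pow, inv_pow, hηpow, smul_mul_assoc, hτpow]
    have : δ ^ 2 ^ (t + 1) ≠ 0 := pow_ne_zero _ hδ
    rw [inv_neg, inv_one, neg_smul, one_smul, neg_neg, div_self this]
  have hprim : IsPrimitiveRoot (algebraMap F L (η ^ 2)) (2 ^ (t + 1)) := by
    have : orderOf (η ^ 2) = 2 ^ (t + 1) := by
      have : Fact (Nat.Prime 2) := ⟨Nat.prime_two⟩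
      apply orderOf_eq_prime_pow
      · rw [hη]
        intro e
        exact h2 (by linear_combination -e)
      · rw [pow_succ 2, pow_mul, hη, neg_one_sq]
    rw [← this]
    exact (IsPrimitiveRoot.orderOf _).map_of_injective (algebraMap F L).injective
  obtain ⟨i, -, hi⟩ := hprim.eq_pow_of_pow_eq_one hωpow
  have hτω : τ ω = ω := by rw [← hi, ← map_pow, AlgHom.commutes]
  have hinv : τ ω * ω = 1 := by
    have hτδ : τ δ ≠ 0 := (_root_.map_ne_zero τ).2 hδ
    have hη' : algebraMap F L η ≠ 0 := (_root_.map_ne_zero _).2 hη0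
    simp only [hω, map_div₀, map_mul, hττ, hτA, Algebra.smul_def, map_inv₀, map_pow,
      AlgHom.commutes]
    field_simp
  rw [hτω] at hinv
  have : η⁻¹ • τ δ * A = ω * δ := by rw [hω, div_mul_cancel₀ _ hδ]
  rw [this]
  linear_combination δ ^ 2 * hinv

/-- Passing to a finer component multiplies the power expression by a sign factor. -/
theorem component_pow (h : IsReciprocalTower σ α n) (h2 : (2 : L) ≠ 0) {r t a b : ℕ} (hr : r < n)
    {δ ε : L} {c : F} (hε : ε ^ 2 = 1)
    (hpow : δ ^ 2 ^ (t + 1) = algebraMap F L c * (α (r + 1) - 1) ^ a * (α (r + 1) + 1) ^ b)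
    (hab : a + b = 2 ^ (t + 1)) :
    (δ * (1 + ε * (α (r + 1))⁻¹)) ^ 2 ^ (t + 2) =
      algebraMap F L (c ^ 2 * 2 ^ 2 ^ (t + 2)) * (α r - 1) ^ a * (α r + 1) ^ b *
        (α r + ε) ^ 2 ^ (t + 1) := by
  obtain ⟨hα, -, -⟩ := h.ne h2 (i := r + 1) hr
  have hrel := h.sq_add_one r hr
  set A := α (r + 1)
  set B := α r
  have e1 : (A - 1) ^ 2 = 2 * A * (B - 1) := by linear_combination hrel
  have e2 : (A + 1) ^ 2 = 2 * A * (B + 1) := by linear_combination hrel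
  have e3 : (1 + ε * A⁻¹) ^ 2 * A = 2 * (B + ε) := by
    field_simp
    linear_combination hrel + hε
  calc (δ * (1 + ε * A⁻¹)) ^ 2 ^ (t + 2)
      = (δ ^ 2 ^ (t + 1)) ^ 2 * ((1 + ε * A⁻¹) ^ 2) ^ 2 ^ (t + 1) := by
        rw [mul_pow, ← pow_mul, ← pow_mul]; congr 2; ring
    _ = algebraMap F L c ^ 2 * ((A - 1) ^ 2) ^ a * ((A + 1) ^ 2) ^ b *
          ((1 + ε * A⁻¹) ^ 2) ^ 2 ^ (t + 1) := by
        rw [hpow, mul_pow, mul_pow, pow_right_comm (A - 1), pow_right_comm (A + 1)]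
    _ = algebraMap F L c ^ 2 * 2 ^ (a + b) * (B - 1) ^ a * (B + 1) ^ b *
          ((1 + ε * A⁻¹) ^ 2 * A) ^ 2 ^ (t + 1) := by
        rw [e1, e2, ← hab]
        generalize B - 1 = x, B + 1 = y, (1 + ε * A⁻¹) ^ 2 = u
        ring
    _ = _ := by
        rw [e3, hab, mul_pow]
        simp only [map_mul, map_pow, map_ofNat]
        have : (2 : L) ^ 2 ^ (t + 2) = 2 ^ 2 ^ (t + 1) * 2 ^ 2 ^ (t + 1) := by
          rw [← pow_add]; congr 1; ring
        rw [this]; ring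

theorem toLinearMap_pow_apply (σ : L →ₐ[F] L) (m : ℕ) (x : L) :
    (σ.toLinearMap ^ m) x = (σ ^ m) x := by
  rw [Module.End.coe_pow, AlgHom.coe_pow]; rfl

theorem aeval_X_pow_sub_C_apply (σ : L →ₐ[F] L) (m : ℕ) (ζ : F) (x : L) :
    aeval σ.toLinearMap (X ^ m - C ζ) x = (σ ^ m) x - ζ • x := by
  simp [toLinearMap_pow_apply]

/-- The annihilator of a component of order `2 ^ (t + 1)` is as small as possible. -/
theorem dvd_of_component (h : IsReciprocalTower σ α n) (h2 : (2 : F) ≠ 0)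
    (hi : IsSquare (-1 : F)) {r t a b : ℕ} (hr : r ≤ n) {ζ : F} {δ : L} {c : F}
    (hζ : ζ ^ 2 ^ t = -1) (hδ : δ ≠ 0) (hσ : (σ ^ 2 ^ r) δ = ζ • δ)
    (hpow : δ ^ 2 ^ (t + 1) = algebraMap F L c * (α r - 1) ^ a * (α r + 1) ^ b)
    (ha : Odd a) (hab : a + b = 2 ^ (t + 1)) {P : F[X]} (hP : aeval σ.toLinearMap P δ = 0) :
    X ^ 2 ^ r - C ζ ∣ P := by
  have h2L : (2 : L) ≠ 0 := by
    simpa only [map_ofNat] using (_root_.map_ne_zero (algebraMap F L)).2 h2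
  induction r generalizing t a b ζ δ c P with
  | zero =>
    refine dvd_of_irreducible_of_aeval_apply_eq_zero σ.toLinearMap ?_ hδ ?_ hP
    · simpa using irreducible_X_sub_C ζ
    · rw [aeval_X_pow_sub_C_apply, hσ, sub_self]
  | succ r ih =>
    by_cases hsq : IsSquare ζ
    swap
    · refine dvd_of_irreducible_of_aeval_apply_eq_zero σ.toLinearMap
        (irreducible_X_pow_two_pow_sub_C _ hi hsq) hδ ?_ hP
      rw [aeval_X_pow_sub_C_apply, hσ, sub_self]
    obtain ⟨η, rfl⟩ := hsq
    rw [← sq] at *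
    have hη0 : η ≠ 0 := by
      rintro rfl
      simp at hζ
    have hhalf : ∀ θ : F, θ ^ 2 = η ^ 2 → ∀ P : F[X],
        aeval σ.toLinearMap P (δ + θ⁻¹ • (σ ^ 2 ^ r) δ) = 0 → X ^ 2 ^ r - C θ ∣ P := by
      intro θ hθ Q hQ
      rw [← hθ] at hζ hσ
      have hθ0 : θ ≠ 0 := by
        rintro rfl
        simp at hζ
      obtain ⟨hα, hα1, hα1'⟩ := h.ne h2L hr
      have hsq := h.mul_sq_eq_one h2 hr hζ hδ hσ hpow ha hab
      obtain ⟨ε, hε, hu⟩ : ∃ ε : L, (ε = 1 ∨ ε = -1) ∧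
          δ + θ⁻¹ • (σ ^ 2 ^ r) δ = δ * (1 + ε * (α (r + 1))⁻¹) := by
        rcases sq_eq_sq_iff_eq_or_eq_neg.1 hsq with e | e
        · refine ⟨1, .inl rfl, ?_⟩
          rw [eq_div_of_mul_eq hα e]; ring
        · refine ⟨-1, .inr rfl, ?_⟩
          rw [eq_div_of_mul_eq hα e]; ring
      have hσ' : (σ ^ 2 ^ r) (δ + θ⁻¹ • (σ ^ 2 ^ r) δ) = θ • (δ + θ⁻¹ • (σ ^ 2 ^ r) δ) := by
        have : (σ ^ 2 ^ r) ((σ ^ 2 ^ r) δ) = θ ^ 2 • δ := by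
          rw [← hσ, ← AlgHom.mul_apply, ← pow_add, pow_succ, mul_two]
        rw [map_add, map_smul, this, smul_add, smul_smul, smul_smul, mul_inv_cancel₀ hθ0, one_smul,
          sq, inv_mul_cancel_left₀ hθ0, add_comm]
      have hε2 : ε ^ 2 = 1 := by rcases hε with rfl | rfl <;> simp
      have hpow' := h.component_pow h2L hr hε2 hpow hab
      have hne : δ * (1 + ε * (α (r + 1))⁻¹) ≠ 0 := by
        refine mul_ne_zero hδ fun e => ?_
        have e' : α (r + 1) = -ε := by
          field_simp at e
          linear_combination e
        rcases hε with rfl | rfl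
        · exact hα1' e'
        · exact hα1 (by simpa using e')
      have hθ' : θ ^ 2 ^ (t + 1) = -1 := by rw [pow_succ', pow_mul, hζ]
      have heven : Even (2 ^ (t + 1)) := by simp [Nat.even_pow]
      rw [← hu] at hpow' hne
      rcases hε with rfl | rfl
      · refine ih (t := t + 1) (a := a) (b := b + 2 ^ (t + 1)) (by omega) hθ' hne hσ'
          (c := c ^ 2 * 2 ^ 2 ^ (t + 2)) (by rw [hpow']; ring) ha ?_ hQ
        rw [← add_assoc, hab]; ring
      · refine ih (t := t + 1) (a := a + 2 ^ (t + 1)) (b := b) (by omega) hθ' hne hσ'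
          (c := c ^ 2 * 2 ^ 2 ^ (t + 2)) (by rw [hpow', ← sub_eq_add_neg]; ring)
          (ha.add_even heven) ?_ hQ
        rw [add_right_comm, hab]; ring
    rw [pow_succ' 2 r]
    refine X_pow_sub_C_dvd_of_components h2 σ.toLinearMap hη0 hP ?_ ?_
    · intro Q hQ
      rw [toLinearMap_pow_apply] at hQ
      exact hhalf η rfl Q hQ
    · intro Q hQ
      rw [toLinearMap_pow_apply] at hQ
      refine hhalf (-η) (neg_sq η) Q ?_
      rwa [inv_neg, neg_smul, ← sub_eq_add_neg]

/-- The top of a reciprocal tower has the annihilator of a normal element. -/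
theorem X_pow_sub_one_dvd (h : IsReciprocalTower σ α n) (h2 : (2 : F) ≠ 0)
    (hi : IsSquare (-1 : F)) {P : F[X]} (hP : aeval σ.toLinearMap P (α n) = 0) :
    X ^ 2 ^ n - C 1 ∣ P := by
  have h2L : (2 : L) ≠ 0 := by
    simpa only [map_ofNat] using (_root_.map_ne_zero (algebraMap F L)).2 h2
  induction n generalizing P with
  | zero =>
    refine dvd_of_irreducible_of_aeval_apply_eq_zero σ.toLinearMap ?_ h.zero_ne_zero ?_ hP
    · simpa using irreducible_X_sub_C (1 : F)
    · rw [aeval_X_pow_sub_C_apply]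
      simp [h.map_zero]
  | succ n ih =>
    obtain ⟨hα, hα1, hα1'⟩ := h.ne h2L le_rfl
    have hrel := h.sq_add_one n n.lt_succ_self
    have hσ : (σ ^ 2 ^ n) (α (n + 1)) = (α (n + 1))⁻¹ :=
      eq_inv_of_mul_eq_one_left (h.map_mul_self n n.lt_succ_self)
    have hsum : α (n + 1) + (α (n + 1))⁻¹ = 2 * α n := by
      field_simp
      linear_combination hrel
    have := X_pow_sub_C_dvd_of_components h2 σ.toLinearMap (one_ne_zero (α := F)) (M := 2 ^ n) hP
    rw [toLinearMap_pow_apply, hσ, inv_one, one_smul, one_pow, ← pow_succ'] at this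
    refine this ?_ ?_
    · intro Q hQ
      rw [hsum, ← map_ofNat (algebraMap F L) 2, ← Algebra.smul_def, map_smul] at hQ
      exact ih (h.mono n.le_succ) ((smul_eq_zero.1 hQ).resolve_left h2)
    · intro Q hQ
      refine (h.mono n.le_succ).dvd_of_component h2 hi (t := 0) (a := 1) (b := 1) (c := 4) le_rfl
        (by simp) ?_ ?_ ?_ odd_one rfl hQ
      · intro e
        have : (α (n + 1) - 1) * (α (n + 1) + 1) = 0 := by
          field_simp at e
          linear_combination e
        rcases mul_eq_zero.1 this with e | e
        · exact hα1 (sub_eq_zero.1 e)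
        · exact hα1' (eq_neg_of_add_eq_zero_left e)
      · rw [map_sub, map_inv₀, hσ, inv_inv, neg_smul, one_smul, neg_sub]
      · rw [map_ofNat]
        linear_combination (α (n + 1) + (α (n + 1))⁻¹ + 2 * α n) * hsum
          - 4 * mul_inv_cancel₀ hα

/-- The part of a tower above level `j` is a tower for `σ ^ 2 ^ j` over any field it fixes. -/
theorem shift (h : IsReciprocalTower σ α n) (h2 : (2 : L) ≠ 0) {j : ℕ} (hj : j ≤ n)
    {E : Type*} [Field E] [Algebra E L] {τ : L →ₐ[E] L} (hτ : ∀ x, τ x = (σ ^ 2 ^ j) x) :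
    IsReciprocalTower τ (fun i => α (j + i)) (n - j) where
  zero_ne_zero := (h.ne h2 hj).1
  zero_ne_one := (h.ne h2 hj).2.1
  zero_ne_neg_one := (h.ne h2 hj).2.2
  map_zero := by
    rw [hτ, add_zero]
    cases j with
    | zero => simpa using h.map_zero
    | succ i =>
      have hσ : (σ ^ 2 ^ i) (α (i + 1)) = (α (i + 1))⁻¹ :=
        eq_inv_of_mul_eq_one_left (h.map_mul_self i hj)
      rw [pow_succ 2 i, mul_two, pow_add, AlgHom.mul_apply, hσ, map_inv₀, hσ, inv_inv]
  sq_add_one i hi := h.sq_add_one (j + i) (by omega)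
  map_mul_self i hi := by
    have hpow : ∀ m x, (τ ^ m) x = ((σ ^ 2 ^ j) ^ m) x := fun m x => by
      rw [AlgHom.coe_pow τ, AlgHom.coe_pow (σ ^ 2 ^ j)]
      exact congrFun (congrArg (·^[m]) (_root_.funext hτ)) x
    rw [hpow, ← pow_mul, ← pow_add]
    exact h.map_mul_self (j + i) (by omega)

theorem linearIndependent (h : IsReciprocalTower σ α n) (h2 : (2 : F) ≠ 0)
    (hi : IsSquare (-1 : F)) :
    LinearIndependent F (fun i : Fin (2 ^ n) => (σ ^ (i : ℕ)) (α n)) := by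
  rw [Fintype.linearIndependent_iff]
  intro c hc i
  have hP : ∑ i, C (c i) * X ^ (i : ℕ) = (0 : F[X]) := by
    refine eq_zero_of_dvd_of_degree_lt (h.X_pow_sub_one_dvd h2 hi (P := ∑ i, C (c i) * X ^ (i : ℕ))
      ?_) ?_
    · simpa [toLinearMap_pow_apply, ← Algebra.smul_def] using hc
    · rw [degree_X_pow_sub_C (by positivity)]
      exact degree_sum_fin_lt c
  simpa [finsetSum_coeff, coeff_C_mul_X_pow, Fin.val_inj] using congrArg (coeff · (i : ℕ)) hP

end IsReciprocalTower

end Chain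

section Rtrans

variable {K : Type} [Field K]

theorem natDegree_Rtrans {g : K[X]} (hg : g ≠ 0) :
    (Rtrans g).natDegree = 2 * g.natDegree := by
  have hX : (X ^ 2 + 1 : K[X]).natDegree = 2 := natDegree_X_pow_add_C (r := (1 : K))
  have h2X : (2 * X : K[X]).natDegree ≤ 1 := (natDegree_C_mul_le (2 : K) X).trans natDegree_X_le
  have hlast : (C g.leadingCoeff * (X ^ 2 + 1) ^ g.natDegree).natDegree = 2 * g.natDegree := by
    rw [natDegree_C_mul (leadingCoeff_ne_zero.2 hg), natDegree_pow, hX, mul_comm]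
  rw [Rtrans, Finset.sum_range_succ, Nat.sub_self, pow_zero, mul_one]
  rcases Nat.eq_zero_or_pos g.natDegree with h0 | hpos
  · simp [h0]
  rw [natDegree_add_eq_right_of_natDegree_lt, coeff_natDegree, hlast]
  rw [coeff_natDegree, hlast]
  refine (natDegree_sum_le_of_forall_le _ _ (n := 2 * g.natDegree - 1) fun i hi => ?_).trans_lt
    (by omega)
  have hi' := Finset.mem_range.1 hi
  refine (natDegree_mul_le_of_le (natDegree_mul_le_of_le (natDegree_C _).le
    (natDegree_pow_le_of_le i hX.le))
    (natDegree_pow_le_of_le (g.natDegree - i) h2X)).trans (by omega)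

theorem aeval_eq_zero_of_aeval_Rtrans_eq_zero {L : Type*} [Field L] [Algebra K L]
    (h2 : (2 : L) ≠ 0) {g : K[X]} (hg : g ≠ 0) {x : L} (hx : aeval x (Rtrans g) = 0) :
    x ≠ 0 ∧ aeval ((x ^ 2 + 1) / (2 * x)) g = 0 := by
  have hx0 : x ≠ 0 := by
    rintro rfl
    rw [Rtrans, Finset.sum_range_succ, map_add, map_sum, Finset.sum_eq_zero, zero_add] at hx
    · simp [hg] at hx
    · intro i hi
      have hi' := Finset.mem_range.1 hi
      simp [(Nat.sub_pos_of_lt hi').ne']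
  refine ⟨hx0, ?_⟩
  have h2x : 2 * x ≠ 0 := mul_ne_zero h2 hx0
  refine (mul_eq_zero.1 (?_ : (2 * x) ^ g.natDegree * _ = 0)).resolve_left (pow_ne_zero _ h2x)
  rw [← hx, Rtrans, aeval_eq_sum_range, map_sum, Finset.mul_sum]
  refine Finset.sum_congr rfl fun i hi => ?_
  have hi' : i ≤ g.natDegree := Nat.lt_succ_iff.1 (Finset.mem_range.1 hi)
  obtain ⟨d, hd⟩ := Nat.exists_eq_add_of_le hi'
  simp only [map_mul, map_pow, map_add, map_one, aeval_X, aeval_C, map_ofNat, Algebra.smul_def]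
  rw [hd, Nat.add_sub_cancel_left, pow_add, div_pow]
  field_simp

/-- A root of an iterated R-transform is the top of a tower of halved reciprocal sums. -/
theorem exists_tower_of_aeval_eq_zero {a : K} {G : ℕ → K[X]}
    (hG1 : G 1 = X ^ 2 + C a * X + 1) (hGrec : ∀ k, 1 ≤ k → G (k + 1) = Rtrans (G k))
    (hG : ∀ k, 1 ≤ k → G k ≠ 0) {L : Type*} [Field L] [Algebra K L] (h2 : (2 : L) ≠ 0)
    {k : ℕ} (hk : 1 ≤ k) {x : L} (hx : aeval x (G k) = 0) :
    ∃ α : ℕ → L, α k = x ∧ α 0 = algebraMap K L (-a / 2) ∧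
      ∀ i < k, α (i + 1) ^ 2 + 1 = 2 * α i * α (i + 1) := by
  induction k, hk using Nat.le_induction generalizing x with
  | base =>
    refine ⟨fun i => if i = 0 then algebraMap K L (-a / 2) else x, by simp, by simp, ?_⟩
    intro i hi
    obtain rfl : i = 0 := by omega
    rw [hG1] at hx
    simp only [map_add, map_pow, aeval_X, map_mul, aeval_C, map_one] at hx
    simp only [if_true, zero_add, one_ne_zero, if_false, map_div₀, map_neg, map_ofNat]
    field_simp
    linear_combination hx
  | succ k hk ih =>
    rw [hGrec k hk] at hx
    obtain ⟨hx0, hx⟩ := aeval_eq_zero_of_aeval_Rtrans_eq_zero h2 (hG k hk) hx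
    obtain ⟨α, hαk, hα0, hα⟩ := ih hx
    refine ⟨Function.update α (k + 1) x, by simp, by simp [hα0], fun i hi => ?_⟩
    rw [Function.update_of_ne (by omega : i ≠ k + 1)]
    rcases Nat.lt_succ_iff_lt_or_eq.1 hi with hi | rfl
    · rw [Function.update_of_ne (by omega)]
      exact hα i hi
    · rw [Function.update_self, hαk]
      field_simp

end Rtrans

section FiniteField

variable {K L : Type*} [Field K] [Fintype K] [Field L] [Algebra K L]

theorem frobeniusAlgHom_pow_apply (m : ℕ) (x : L) :
    (FiniteField.frobeniusAlgHom K L ^ m) x = x ^ Fintype.card K ^ m := by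
  rw [AlgHom.coe_pow, FiniteField.coe_frobeniusAlgHom, pow_iterate]

theorem two_ne_zero_of_card_mod_four (h4 : Fintype.card K % 4 = 1) : (2 : K) ≠ 0 :=
  Ring.two_ne_zero fun h => by
    have := FiniteField.even_card_iff_char_two.1 h
    omega

/-- A tower of halved reciprocal sums over `b`, where `b ^ 2 - 1` is a nonsquare of a finite field
in which `-1` is a square, is a reciprocal tower for the Frobenius endomorphism. -/
theorem isReciprocalTower_frobenius (h4 : Fintype.card K % 4 = 1) {b : K}
    (hb : ¬ IsSquare (b ^ 2 - 1)) {α : ℕ → L} {n : ℕ} (hα0 : α 0 = algebraMap K L b)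
    (hα : ∀ i < n, α (i + 1) ^ 2 + 1 = 2 * α i * α (i + 1)) :
    IsReciprocalTower (FiniteField.frobeniusAlgHom K L) α n := by
  have h2K : (2 : K) ≠ 0 := two_ne_zero_of_card_mod_four h4
  have h2 : (2 : L) ≠ 0 := by
    simpa only [map_ofNat] using (_root_.map_ne_zero (algebraMap K L)).2 h2K
  have hi : IsSquare (-1 : K) := FiniteField.isSquare_neg_one_iff.2 (by omega)
  have hring : ringChar K ≠ 2 := fun h => by
    have := FiniteField.even_card_iff_char_two.1 h
    omega
  have hcard : ∀ i, ∃ M, Fintype.card K ^ 2 ^ i = 4 * M + 1 := fun i => by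
    have : Fintype.card K ^ 2 ^ i % 4 = 1 := by simp [Nat.pow_mod, h4]
    exact ⟨Fintype.card K ^ 2 ^ i / 4, by omega⟩
  have h2pow : ∀ i M, Fintype.card K ^ 2 ^ i = 4 * M + 1 → (2 : L) ^ (4 * M) = 1 := by
    intro i M hM
    have : (FiniteField.frobeniusAlgHom K L ^ 2 ^ i) 2 = 2 := map_ofNat _ 2
    rw [frobeniusAlgHom_pow_apply, hM, pow_succ] at this
    exact mul_right_cancel₀ h2 (by rw [this, one_mul])
  have hstep : ∀ i < n, ∀ M, Fintype.card K ^ 2 ^ i = 4 * M + 1 →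
      (FiniteField.frobeniusAlgHom K L ^ 2 ^ i) (α i) = α i →
      (α i ^ 2 - 1) ^ (2 * M) = -1 → α (i + 1) ≠ 0 ∧
      (FiniteField.frobeniusAlgHom K L ^ 2 ^ i) (α (i + 1)) = (α (i + 1))⁻¹ := by
    intro i hin M hM hfix hs
    have hrel := hα i hin
    have hx0 : α (i + 1) ≠ 0 := fun e => by simp [e] at hrel
    refine ⟨hx0, ?_⟩
    set ψ := FiniteField.frobeniusAlgHom K L ^ 2 ^ i with hψ
    set x := α (i + 1)
    have hadd : x + x⁻¹ = 2 * α i := by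
      field_simp
      linear_combination hrel
    have hsub : (x - x⁻¹) ^ 2 = 2 ^ 2 * (α i ^ 2 - 1) := by
      linear_combination (x + x⁻¹ + 2 * α i) * hadd - 4 * mul_inv_cancel₀ hx0
    have h₁ : ψ x + (ψ x)⁻¹ = x + x⁻¹ := by
      rw [← map_inv₀, ← map_add, hadd, map_mul, hfix, map_ofNat]
    have h₂ : ψ x - (ψ x)⁻¹ = -(x - x⁻¹) := by
      rw [← map_inv₀, ← map_sub, hψ, frobeniusAlgHom_pow_apply, hM, pow_succ,
        (by ring : 4 * M = 2 * (2 * M)), pow_mul, hsub, mul_pow, hs, ← pow_mul,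
        (by ring : 2 * (2 * M) = 4 * M), h2pow i M hM]
      ring
    exact mul_left_cancel₀ h2 (by linear_combination h₁ + h₂)
  have key : ∀ i ≤ n, ∀ M, Fintype.card K ^ 2 ^ i = 4 * M + 1 →
      (FiniteField.frobeniusAlgHom K L ^ 2 ^ i) (α i) = α i ∧
      (α i ^ 2 - 1) ^ (2 * M) = -1 := by
    intro i
    induction i with
    | zero =>
      intro _ M hM
      refine ⟨by rw [hα0, AlgHom.commutes], ?_⟩
      rw [pow_zero, pow_one] at hM
      have hb0 : b ^ 2 - 1 ≠ 0 := fun h => hb (h ▸ IsSquare.zero)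
      have := (FiniteField.pow_dichotomy hring hb0).resolve_left
        (mt (FiniteField.isSquare_iff hring hb0).2 hb)
      rw [hM, (by omega : (4 * M + 1) / 2 = 2 * M)] at this
      rw [hα0]
      simpa using congrArg (algebraMap K L) this
    | succ i ih =>
      intro hin M' hM'
      obtain ⟨M, hM⟩ := hcard i
      obtain ⟨hfix, hs⟩ := ih (by omega) M hM
      obtain ⟨hx0, hinv⟩ := hstep i hin M hM hfix hs
      refine ⟨by rw [pow_succ 2 i, mul_two, pow_add, AlgHom.mul_apply, hinv, map_inv₀, hinv,
        inv_inv], ?_⟩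
      have hMM : 2 * M' = (4 * M + 1 + 1) * (2 * M) := by
        rw [pow_succ 2 i, pow_mul, hM] at hM'
        nlinarith
      have hrel := hα i hin
      have hnorm : (α (i + 1) ^ 2 - 1) ^ (4 * M + 1 + 1) = -(2 ^ 2 * (α i ^ 2 - 1)) := by
        rw [pow_succ, ← hM, ← frobeniusAlgHom_pow_apply, map_sub, map_pow, hinv, map_one]
        field_simp
        linear_combination -(α (i + 1) ^ 2 + 1 + 2 * α i * α (i + 1)) * hrel
      rw [hMM, pow_mul, hnorm, (even_two_mul M).neg_pow, mul_pow, hs, ← pow_mul,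
        (by ring : 2 * (2 * M) = 4 * M), h2pow i M hM, one_mul]
  have hmap : ∀ i < n, (FiniteField.frobeniusAlgHom K L ^ 2 ^ i) (α (i + 1)) * α (i + 1) = 1 := by
    intro i hin
    obtain ⟨M, hM⟩ := hcard i
    obtain ⟨hfix, hs⟩ := key i hin.le M hM
    obtain ⟨hx0, hinv⟩ := hstep i hin M hM hfix hs
    rw [hinv, inv_mul_cancel₀ hx0]
  have hinj := (algebraMap K L).injective
  refine ⟨?_, ?_, ?_, by rw [hα0, AlgHom.commutes], hα, hmap⟩
  · rw [hα0, map_ne_zero_iff _ hinj]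
    rintro rfl
    exact hb (by simpa using hi)
  · rw [hα0, ← map_one (algebraMap K L)]
    exact hinj.ne fun e => hb (by simp [e])
  · rw [hα0, ← map_one (algebraMap K L), ← map_neg]
    exact hinj.ne fun e => hb (by simp [e])

theorem pow_card_pow_natDegree_minpoly {x : L} (hx : IsIntegral K x) :
    x ^ Fintype.card K ^ (minpoly K x).natDegree = x := by
  have := IntermediateField.adjoin.finiteDimensional hx
  have : Finite (IntermediateField.adjoin K {x}) := Module.finite_of_finite K
  have := Fintype.ofFinite (IntermediateField.adjoin K {x})
  have h := FiniteField.pow_card (IntermediateField.AdjoinSimple.gen K x)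
  rw [Module.card_eq_pow_finrank (K := K), IntermediateField.adjoin.finrank hx] at h
  simpa using congrArg (algebraMap _ L) h

theorem two_pow_dvd_natDegree_minpoly (h2 : (2 : L) ≠ 0) {α : ℕ → L} {n : ℕ}
    (h : IsReciprocalTower (FiniteField.frobeniusAlgHom K L) α n) (hx : IsIntegral K (α n)) :
    2 ^ n ∣ (minpoly K (α n)).natDegree := by
  cases n with
  | zero => simp
  | succ n =>
    obtain ⟨hα, hα1, hα1'⟩ := h.ne h2 le_rfl
    have hinv := eq_inv_of_mul_eq_one_left (h.map_mul_self n n.lt_succ_self)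
    have hper : ∀ m, Function.IsPeriodicPt (FiniteField.frobeniusAlgHom K L) m (α (n + 1)) ↔
        (FiniteField.frobeniusAlgHom K L ^ m) (α (n + 1)) = α (n + 1) := fun m => by
      rw [AlgHom.coe_pow]; rfl
    have : Fact (Nat.Prime 2) := ⟨Nat.prime_two⟩
    rw [← Function.minimalPeriod_eq_prime_pow (f := FiniteField.frobeniusAlgHom K L)
      (x := α (n + 1)) (p := 2) (k := n)]
    · refine Function.IsPeriodicPt.minimalPeriod_dvd ((hper _).2 ?_)
      rw [frobeniusAlgHom_pow_apply, pow_card_pow_natDegree_minpoly hx]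
    · rw [hper, hinv]
      intro e
      have : (α (n + 1) - 1) * (α (n + 1) + 1) = 0 := by
        field_simp at e
        linear_combination -e
      rcases mul_eq_zero.1 this with e | e
      · exact hα1 (sub_eq_zero.1 e)
      · exact hα1' (eq_neg_of_add_eq_zero_left e)
    · rw [hper, pow_succ 2 n, mul_two, pow_add, AlgHom.mul_apply, hinv, map_inv₀, hinv, inv_inv]

end FiniteField

/-- The conjugates of the top of a reciprocal tower form a basis over each intermediate field of
`2`-power degree. -/
theorem completelyNormal_of_isReciprocalTower {K L : Type*} [Field K] [Fintype K] [Field L]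
    [Algebra K L] (h4 : Fintype.card K % 4 = 1) {α : ℕ → L} {k j : ℕ}
    (h : IsReciprocalTower (FiniteField.frobeniusAlgHom K L) α k) (hL : finrank K L = 2 ^ k)
    (hj : j ≤ k) :
    (∀ co : Fin (2 ^ k / 2 ^ j) → L, (∀ i, co i ^ Fintype.card K ^ 2 ^ j = co i) →
      ∑ i, co i * α k ^ Fintype.card K ^ (2 ^ j * (i : ℕ)) = 0 → ∀ i, co i = 0) ∧
    (∀ x : L, ∃ co : Fin (2 ^ k / 2 ^ j) → L, (∀ i, co i ^ Fintype.card K ^ 2 ^ j = co i) ∧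
      x = ∑ i, co i * α k ^ Fintype.card K ^ (2 ^ j * (i : ℕ))) := by
  have h2K : (2 : K) ≠ 0 := two_ne_zero_of_card_mod_four h4
  have hi : IsSquare (-1 : K) := FiniteField.isSquare_neg_one_iff.2 (by omega)
  have : FiniteDimensional K L := .of_finrank_pos (hL ▸ by positivity)
  have : Finite L := Module.finite_of_finite K
  set φ := FiniteField.frobeniusAlgEquivOfAlgebraic K L with hφ
  have hφpow : ∀ m x, (φ ^ m) x = x ^ Fintype.card K ^ m := fun m x => by
    rw [AlgEquiv.coe_pow, FiniteField.coe_frobeniusAlgEquivOfAlgebraic_iterate]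
  set H := Subgroup.zpowers (φ ^ 2 ^ j) with hH
  set E := IntermediateField.fixedField H with hE
  have hmem : ∀ x : L, x ∈ E ↔ x ^ Fintype.card K ^ 2 ^ j = x := fun x => by
    rw [hE, IntermediateField.mem_fixedField_iff, ← hφpow]
    refine ⟨fun hx => hx _ (Subgroup.mem_zpowers _), fun hx => ?_⟩
    have : H ≤ MulAction.stabilizer Gal(L/K) x := by
      rw [hH, Subgroup.zpowers_le]
      exact hx
    exact fun f hf => this hf
  let τ : L →ₐ[E] L :=
    { (φ ^ 2 ^ j : Gal(L/K)).toAlgHom.toRingHom with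
      commutes' := fun x => by
        have := (hmem x).1 x.2
        rw [← hφpow] at this
        exact this }
  have hτ : ∀ x, τ x = x ^ Fintype.card K ^ 2 ^ j := fun x => hφpow _ x
  have hτpow : ∀ m x, (τ ^ m) x = x ^ Fintype.card K ^ (2 ^ j * m) := fun m x => by
    rw [AlgHom.coe_pow, _root_.funext hτ, pow_iterate, ← pow_mul]
  have h2L : (2 : L) ≠ 0 := by
    simpa only [map_ofNat] using (_root_.map_ne_zero (algebraMap K L)).2 h2K
  have h2E : (2 : E) ≠ 0 := by
    simpa only [map_ofNat] using (_root_.map_ne_zero (algebraMap K E)).2 h2K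
  have hiE : IsSquare (-1 : E) := by simpa using hi.map (algebraMap K E)
  have htower : IsReciprocalTower τ (fun i => α (j + i)) (k - j) :=
    h.shift h2L hj fun x => by rw [hτ, frobeniusAlgHom_pow_apply]
  have hli := htower.linearIndependent h2E hiE
  have hN : 2 ^ k / 2 ^ j = 2 ^ (k - j) := Nat.pow_div hj two_pos
  simp only [Nat.add_sub_cancel' hj, hτpow] at hli
  rw [hN]
  constructor
  · intro co hco hsum i
    have := Fintype.linearIndependent_iff.1 hli (fun i => ⟨co i, (hmem _).2 (hco i)⟩)
      (by simpa [Algebra.smul_def] using hsum) i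
    simpa using congrArg (algebraMap E L) this
  · intro x
    have hfin : Fintype.card (Fin (2 ^ (k - j))) = finrank E L := by
      rw [Fintype.card_fin, hE, IntermediateField.finrank_fixedField_eq_card, hH,
        Nat.card_zpowers, orderOf_pow, FiniteField.orderOf_frobeniusAlgEquivOfAlgebraic, hL,
        Nat.gcd_eq_right (pow_dvd_pow 2 hj), hN]
    have hx : x ∈ Submodule.span E (Set.range fun i : Fin (2 ^ (k - j)) =>
        α k ^ Fintype.card K ^ (2 ^ j * (i : ℕ))) := by
      rw [hli.span_eq_top_of_card_eq_finrank' hfin]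
      trivial
    obtain ⟨c, hc⟩ := (Submodule.mem_span_range_iff_exists_fun E).1 hx
    exact ⟨fun i => c i, fun i => (hmem _).1 (c i).2, by simp [← hc, Algebra.smul_def]⟩

/-- Chapman's theorem: for `q ≡ 1 (mod 4)` and `g₁ = x² + ax + 1` irreducible over `F_q`,
the iterates `g_{k+1} = g_k^R` are irreducible of degree `2^k`, and every root of `g_k` is
completely normal over `F_q`: for each divisor `m` of `2^k`, the conjugates
`α^{q^{m i}}` form a basis of `F_{q^{2^k}}` over the subfield `F_{q^m}` (the fixed field
of `x ↦ x^{q^m}`). -/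
theorem stmt_13 (K : Type) [Field K] [Fintype K] (q : ℕ)
    (hq : Fintype.card K = q) (h4 : q % 4 = 1)
    (a : K) (hirr : Irreducible ((X : Polynomial K) ^ 2 + C a * X + 1))
    (G : ℕ → Polynomial K) (hG1 : G 1 = (X : Polynomial K) ^ 2 + C a * X + 1)
    (hGrec : ∀ k, 1 ≤ k → G (k + 1) = Rtrans (G k)) :
    ∀ k, 1 ≤ k → Irreducible (G k) ∧ (G k).natDegree = 2 ^ k ∧
      ∀ (L : Type) [Field L] [Algebra K L], Module.finrank K L = 2 ^ k →
        ∀ α : L, aeval α (G k) = 0 →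
          ∀ m : ℕ, m ∣ 2 ^ k →
            (∀ co : Fin (2 ^ k / m) → L, (∀ i, co i ^ q ^ m = co i) →
              ∑ i, co i * α ^ q ^ (m * (i : ℕ)) = 0 → ∀ i, co i = 0) ∧
            (∀ x : L, ∃ co : Fin (2 ^ k / m) → L, (∀ i, co i ^ q ^ m = co i) ∧
              x = ∑ i, co i * α ^ q ^ (m * (i : ℕ))) := by
  subst hq
  have h2K : (2 : K) ≠ 0 := two_ne_zero_of_card_mod_four h4
  have hb : ¬ IsSquare ((-a / 2) ^ 2 - 1) := by
    rintro ⟨d, hd⟩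
    have hroot : IsRoot ((X : K[X]) ^ 2 + C a * X + 1) (-a / 2 + d) := by
      simp only [IsRoot.def, eval_add, eval_pow, eval_X, eval_mul, eval_C, eval_one]
      field_simp at hd ⊢
      linear_combination -hd
    have hdeg := degree_eq_one_of_irreducible_of_root hirr hroot
    have : ((X : K[X]) ^ 2 + C a * X + 1).degree = 2 := by compute_degree!
    rw [this] at hdeg
    norm_num at hdeg
  have hdeg : ∀ k, 1 ≤ k → (G k).natDegree = 2 ^ k := by
    intro k hk
    induction k, hk using Nat.le_induction with
    | base => rw [hG1]; compute_degree!
    | succ k hk ih =>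
      rw [hGrec k hk, natDegree_Rtrans, ih, pow_succ']
      exact ne_zero_of_natDegree_gt (ih ▸ Nat.two_pow_pos k)
  have hG0 : ∀ k, 1 ≤ k → G k ≠ 0 := fun k hk =>
    ne_zero_of_natDegree_gt (hdeg k hk ▸ Nat.two_pow_pos k)
  have htower : ∀ k, 1 ≤ k → ∀ (L : Type) [Field L] [Algebra K L] (x : L), aeval x (G k) = 0 →
      ∃ α : ℕ → L, α k = x ∧ IsReciprocalTower (FiniteField.frobeniusAlgHom K L) α k := by
    intro k hk L _ _ x hx
    have h2 : (2 : L) ≠ 0 := by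
      simpa only [map_ofNat] using (_root_.map_ne_zero (algebraMap K L)).2 h2K
    obtain ⟨α, hαk, hα0, hα⟩ := exists_tower_of_aeval_eq_zero hG1 hGrec hG0 h2 hk hx
    exact ⟨α, hαk, isReciprocalTower_frobenius h4 hb hα0 hα⟩
  intro k hk
  refine ⟨?_, hdeg k hk, ?_⟩
  · have h2 : (2 : AlgebraicClosure K) ≠ 0 := by
      simpa only [map_ofNat] using (_root_.map_ne_zero (algebraMap K (AlgebraicClosure K))).2 h2K
    obtain ⟨x, hx⟩ := IsAlgClosed.exists_aeval_eq_zero (AlgebraicClosure K) (G k) (by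
      rw [degree_eq_natDegree (hG0 k hk), hdeg k hk]
      exact_mod_cast (Nat.two_pow_pos k).ne')
    obtain ⟨α, rfl, hα⟩ := htower k hk _ x hx
    have hint : IsIntegral K (α k) := Algebra.IsIntegral.isIntegral _
    have hle := Nat.le_of_dvd (minpoly.natDegree_pos hint)
      (two_pow_dvd_natDegree_minpoly h2 hα hint)
    exact (associated_of_dvd_of_natDegree_le (minpoly.dvd K _ hx) (hG0 k hk)
      (hdeg k hk ▸ hle)).irreducible (minpoly.irreducible hint)
  · intro L _ _ hL x hx m hm
    obtain ⟨j, hj, rfl⟩ := (Nat.dvd_prime_pow Nat.prime_two).1 hm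
    obtain ⟨α, rfl, hα⟩ := htower k hk L x hx
    exact completelyNormal_of_isReciprocalTower h4 hα hL hj
end

section
/- Let g(x) = x - A ∈ F_q[x] with A ≠ a/c, t ≥ 2 an integer all of whose prime factors divide q - 1, and σ = [[a,b],[c,d]] ∈ GL_2(F_q) with cd ≠ 0 and ab = 0. Assume that for every prime ℓ | t, the element η(g;σ) = (-d/c)·g(b/d)·g(a/c)^{-1} is not an ℓ-th power in F_q, and if q ≡ 3 (mod 4) assume t is odd. Define g_0 = g and g_k = g_{k-1}^{R_{σ,t}} for k ≥ 1, where g^{R_{σ,t}} = P_{σ^{-1}}(S_t(P_σ(g))) and S_t(f)(x) = f(x^t). Then for every k ≥ 0, g_k is irreducible of degree t^k and every root of g_k is completely normal over F_q. -/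
open Polynomial Module

/-- `S_t(f)(x) = f(x^t)`. -/
noncomputable def St {K : Type} [Field K] (t : ℕ) (f : Polynomial K) : Polynomial K :=
  f.comp (X ^ t)

/-- The `R_{σ,t}`-transform `g ↦ P_{σ⁻¹}(S_t(P_σ(g)))`, with
`σ⁻¹ = (ad - bc)⁻¹ [[d,-b],[-c,a]]`. -/
noncomputable def Rsigma {K : Type} [Field K] (a b c d : K) (t : ℕ)
    (g : Polynomial K) : Polynomial K :=
  Pmat (d / (a * d - b * c)) (-b / (a * d - b * c)) (-c / (a * d - b * c))
    (a / (a * d - b * c)) (St t (Pmat a b c d g))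

theorem pow_ne_adjoinSimple_gen {K E : Type*} [Field K] [Field E] [Algebra K E] {x : E} {m p : ℕ}
    {a ε : K} (hm : m ≠ 0) (hx : minpoly K x = X ^ m - C a) (hε : ε ^ p = -1)
    (ha : ∀ b : K, b ^ p ≠ a) (y : IntermediateField.adjoin K {x}) :
    y ^ p ≠ IntermediateField.AdjoinSimple.gen K x := by
  intro hy
  have hint : IsIntegral K x :=
    minpoly.ne_zero_iff.1 (hx ▸ X_pow_sub_C_ne_zero (Nat.pos_of_ne_zero hm) a)
  apply ha (ε ^ (m + 1) * Algebra.norm K y)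
  rw [mul_pow, ← map_pow, hy, ← IntermediateField.adjoin.powerBasis_gen hint,
    Algebra.PowerBasis.norm_gen_eq_coeff_zero_minpoly]
  have h2 : ((-1 : K) ^ m) * (-1) ^ m = 1 := by rw [← mul_pow]; simp
  rw [← pow_mul, mul_comm, mul_comm (m + 1), pow_mul, hε]
  simp only [IntermediateField.adjoin.powerBasis_gen, IntermediateField.minpoly_gen, hx,
    IntermediateField.adjoin.powerBasis_dim, natDegree_X_pow_sub_C, coeff_sub, coeff_X_pow,
    coeff_C_zero, hm.symm, if_false, pow_succ]
  linear_combination a * h2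

theorem X_pow_sub_C_irreducible_of_forall_prime.{u} {K : Type u} [Field K] {n : ℕ} (hn : n ≠ 0)
    {a : K} (hneg : ∀ p : ℕ, p.Prime → p ∣ n → ∃ ε : K, ε ^ p = -1)
    (ha : ∀ p : ℕ, p.Prime → p ∣ n → ∀ b : K, b ^ p ≠ a) :
    Irreducible (X ^ n - C a) := by
  induction n using induction_on_primes generalizing K a with
  | zero => exact absurd rfl hn
  | one => simpa using irreducible_X_sub_C a
  | prime_mul p n hp IH =>
    rw [mul_comm]
    apply X_pow_mul_sub_C_irreducible
      (X_pow_sub_C_irreducible_of_prime hp (ha p hp (dvd_mul_right _ _)))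
    intro E _ _ x hx
    apply IH (right_ne_zero_of_mul hn)
    · intro q hq hqn
      obtain ⟨ε, hε⟩ := hneg q hq (dvd_mul_of_dvd_right hqn p)
      exact ⟨algebraMap K _ ε, by rw [← map_pow, hε, map_neg, map_one]⟩
    · intro q hq hqn b
      obtain ⟨ε, hε⟩ := hneg q hq (dvd_mul_of_dvd_right hqn p)
      exact pow_ne_adjoinSimple_gen hp.ne_zero hx hε (ha q hq (dvd_mul_of_dvd_right hqn p)) b

/-- Lifting the exponent for `q ^ s - 1`, uniformly in the prime. -/
theorem padicValNat_pow_sub_one {p q s : ℕ} (hp : p.Prime) (hq : 1 < q) (hpq : p ∣ q - 1)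
    (h2 : p = 2 → q % 4 ≠ 3) (hs : s ≠ 0) :
    padicValNat p (q ^ s - 1) = padicValNat p (q - 1) + padicValNat p s := by
  have := Fact.mk hp
  have hndvd : ¬ p ∣ q := fun h => hp.one_lt.ne' <| Nat.dvd_one.1 <| by
    simpa [Nat.sub_sub_self hq.le] using Nat.dvd_sub h hpq
  rcases hp.eq_two_or_odd' with rfl | hodd
  · have h4 : (4 : ℤ) ∣ (q : ℤ) - 1 := by have := h2 rfl; omega
    have key := Int.two_pow_sub_pow' (x := q) (y := 1) s h4 (by omega)
    rw [← Nat.cast_inj (R := ℕ∞), Nat.cast_add, padicValNat_eq_emultiplicity (by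
        have := Nat.one_lt_pow hs hq; omega), padicValNat_eq_emultiplicity (by omega),
      padicValNat_eq_emultiplicity hs]
    iterate 3 rw [← Int.natCast_emultiplicity]
    rw [Nat.cast_sub hq.le, Nat.cast_sub (Nat.one_le_pow _ _ (by omega))]
    simpa using key
  · simpa using padicValNat.pow_sub_pow hodd hq hpq hndvd hs

theorem dvd_pow_div_gcd_sub_one {q e : ℕ} (hq : 1 < q) (he : e ≠ 0)
    (hdvd : ∀ p : ℕ, p.Prime → p ∣ e → p ∣ q - 1) (h2 : 2 ∣ e → q % 4 ≠ 3) :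
    e ∣ q ^ (e / e.gcd (q - 1)) - 1 ∧
      ∀ p : ℕ, p.Prime → p ∣ e / e.gcd (q - 1) → ¬ p * e ∣ q ^ (e / e.gcd (q - 1)) - 1 := by
  set s := e / e.gcd (q - 1) with hs
  have hg : e.gcd (q - 1) ∣ e := Nat.gcd_dvd_left _ _
  have hq0 : q - 1 ≠ 0 := by omega
  have hs0 : s ≠ 0 := (Nat.div_pos (Nat.le_of_dvd (by omega) hg) (Nat.gcd_pos_of_pos_left _
    (by omega))).ne'
  have hpow : q ^ s - 1 ≠ 0 := by have := Nat.one_lt_pow hs0 hq; omega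
  have hval : ∀ p : ℕ, p.Prime → p ∣ e → padicValNat p (q ^ s - 1) =
      padicValNat p (q - 1) + (padicValNat p e - min (padicValNat p e) (padicValNat p (q - 1))) := by
    intro p hp hpe
    have := Fact.mk hp
    rw [padicValNat_pow_sub_one hp hq (hdvd p hp hpe) (fun h => h2 (h ▸ hpe)) hs0, hs,
      padicValNat.div_of_dvd hg]
    congr 2
    simp only [← Nat.factorization_def _ hp, Nat.factorization_gcd he hq0, Finsupp.inf_apply]
  constructor
  · rw [← Nat.factorization_le_iff_dvd he hpow]
    intro p
    by_cases hp : p.Prime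
    · by_cases hpe : p ∣ e
      · rw [Nat.factorization_def _ hp, Nat.factorization_def _ hp, hval p hp hpe]
        omega
      · simp [Nat.factorization_eq_zero_of_not_dvd hpe]
    · simp [Nat.factorization_eq_zero_of_not_prime _ hp]
  · intro p hp hps h
    have := Fact.mk hp
    have hpe : p ∣ e := hps.trans (Nat.div_dvd_of_dvd hg)
    have h1 := hval p hp hpe
    have h3 := (padicValNat_dvd_iff_le (p := p) hpow (n := padicValNat p (p * e))).1
      (pow_padicValNat_dvd.trans h)
    have h4 : 1 ≤ padicValNat p s := one_le_padicValNat_of_dvd hs0 hps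
    rw [hs, padicValNat.div_of_dvd hg] at h4
    have h5 : padicValNat p (e.gcd (q - 1)) = min (padicValNat p e) (padicValNat p (q - 1)) := by
      simp only [← Nat.factorization_def _ hp, Nat.factorization_gcd he hq0, Finsupp.inf_apply]
    rw [padicValNat.mul hp.ne_zero he, padicValNat_self] at h3
    omega

theorem exists_pow_eq_neg_one (F : Type*) [Field F] [Fintype F] {n : ℕ}
    (h2 : 2 ∣ n → Fintype.card F % 4 ≠ 3) :
    ∀ p : ℕ, p.Prime → p ∣ n → ∃ ε : F, ε ^ p = -1 := by
  intro p hp hpn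
  rcases hp.eq_two_or_odd' with rfl | hodd
  · obtain ⟨ε, hε⟩ := FiniteField.isSquare_neg_one_iff.2 (h2 hpn)
    exact ⟨ε, by rw [sq, hε]⟩
  · exact ⟨-1, hodd.neg_one_pow⟩

/-- If `β ^ n = η` and `X ^ n - η` satisfies the irreducibility criterion, then `∑ β ^ i` has
no nontrivial annihilator of degree `< n` under the Frobenius. -/
theorem eq_zero_of_aeval_frobenius_geom_sum {F L : Type*} [Field F] [Fintype F] [Field L]
    [Algebra F L] [FiniteDimensional F L] {η : F} {β : L}
    (hβ : β ^ finrank F L = algebraMap F L η) (hη : η ≠ 0)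
    (hdvd : ∀ p : ℕ, p.Prime → p ∣ finrank F L → p ∣ Fintype.card F - 1)
    (h2 : 2 ∣ finrank F L → Fintype.card F % 4 ≠ 3)
    (hpow : ∀ p : ℕ, p.Prime → p ∣ finrank F L → ∀ y : F, y ^ p ≠ η)
    {P : F[X]} (hdeg : P.degree < finrank F L)
    (hP : aeval (FiniteField.frobeniusAlgHom F L).toLinearMap P
      (∑ i ∈ Finset.range (finrank F L), β ^ i) = 0) : P = 0 := by
  classical
  set n := finrank F L with hn
  set q := Fintype.card F with hqdef
  have hq : 1 < q := Fintype.one_lt_card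
  set T := (FiniteField.frobeniusAlgHom F L).toLinearMap with hT
  have hTa : ∀ x : L, T x = x ^ q := fun x => rfl
  have hTpow : ∀ (s : ℕ) (x : L), (T ^ s) x = x ^ q ^ s := by
    intro s
    induction s with
    | zero => simp
    | succ s ih => intro x; rw [pow_succ', Module.End.mul_apply, ih, hTa, ← pow_mul, pow_succ]
  have hn0 : n ≠ 0 := finrank_pos.ne'
  have hneg := exists_pow_eq_neg_one F h2
  have hirr : Irreducible (X ^ n - C η) :=
    X_pow_sub_C_irreducible_of_forall_prime hn0 hneg hpow
  have hmin : minpoly F β = X ^ n - C η :=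
    (minpoly.eq_of_irreducible_of_monic hirr (by simp [hβ]) (monic_X_pow_sub_C _ hn0)).symm
  have hβ0 : β ≠ 0 := by
    rintro rfl
    rw [zero_pow hn0, eq_comm, map_eq_zero] at hβ
    exact hη hβ
  have hli : LinearIndependent F fun i : Fin n => β ^ (i : ℕ) := by
    have h := linearIndependent_pow (K := F) β
    have hd : (minpoly F β).natDegree = n := by rw [hmin, natDegree_X_pow_sub_C]
    rwa [hd] at h
  have : Nonempty (Fin n) := ⟨⟨0, Nat.pos_of_ne_zero hn0⟩⟩
  let B := basisOfLinearIndependentOfCardEqFinrank hli (by simp [hn])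
  have hB : ∀ i : Fin n, B i = β ^ (i : ℕ) := fun i => by simp [B]
  have hred : ∀ k : ℕ, β ^ k = η ^ (k / n) • β ^ (k % n) := by
    intro k
    conv_lhs => rw [← Nat.div_add_mod k n, pow_add, pow_mul, hβ, ← map_pow, ← Algebra.smul_def]
  have hcop : Nat.Coprime q n := by
    refine Nat.coprime_of_dvd fun p hp hpq hpn => ?_
    have h1 := hdvd p hp hpn
    exact hp.one_lt.ne' <| Nat.dvd_one.1 <| by
      simpa [Nat.sub_sub_self hq.le] using Nat.dvd_sub hpq h1
  have hphi : (q : ZMod n) ^ (n.totient - 1) * q = 1 := by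
    have h1 := (ZMod.natCast_eq_natCast_iff _ _ _).2 (Nat.ModEq.pow_totient hcop)
    rw [← pow_succ, Nat.sub_add_cancel (Nat.totient_pos.2 (Nat.pos_of_ne_zero hn0))]
    exact_mod_cast h1
  have hκ1 : η ^ (q - 1) = 1 := FiniteField.pow_card_sub_one_eq_one η hη
  have hann : ∀ j : Fin n, aeval T P (β ^ (j : ℕ)) = 0 := by
    intro j
    let O : ZMod n → Prop := fun x => ∃ a : ℕ, x = (q : ZMod n) ^ a * (j : ℕ)
    have hO : ∀ x, O (q * x) ↔ O x := by
      intro x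
      constructor
      · rintro ⟨a, ha⟩
        exact ⟨n.totient - 1 + a, by rw [pow_add, mul_assoc, ← ha, ← mul_assoc, hphi, one_mul]⟩
      · rintro ⟨a, rfl⟩
        exact ⟨a + 1, by ring⟩
    let π : L →ₗ[F] L := B.constr F fun i => if O ((i : ℕ) : ZMod n) then β ^ (i : ℕ) else 0
    have hπ : ∀ k : ℕ, π (β ^ k) = if O (k : ZMod n) then β ^ k else 0 := by
      intro k
      have hk : k % n < n := Nat.mod_lt _ (Nat.pos_of_ne_zero hn0)
      have h1 : π (β ^ (k % n)) = if O (k : ZMod n) then β ^ (k % n) else 0 := by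
        have := B.constr_basis F (fun i => if O ((i : ℕ) : ZMod n) then β ^ (i : ℕ) else 0)
          ⟨k % n, hk⟩
        rw [hB] at this
        simpa [π] using this
      rw [hred k, map_smul, h1]
      split_ifs <;> simp
    have hcomm : Commute T π := by
      refine B.ext fun i => ?_
      rw [Module.End.mul_apply, Module.End.mul_apply, hB, hπ, hTa, hTa, ← pow_mul, hπ]
      have : O (((i * q : ℕ)) : ZMod n) ↔ O ((i : ℕ) : ZMod n) := by
        rw [← hO ((i : ℕ) : ZMod n)]; push_cast; rw [mul_comm]
      simp only [this]
      split_ifs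
      · rw [pow_mul]
      · exact zero_pow (by omega)
    set v := π (∑ i ∈ Finset.range n, β ^ i) with hv
    have hvsum : v = ∑ i : Fin n, (if O ((i : ℕ) : ZMod n) then (1 : F) else 0) • β ^ (i : ℕ) := by
      rw [hv, map_sum, Finset.sum_range]
      refine Finset.sum_congr rfl fun i _ => ?_
      rw [hπ]; split_ifs <;> simp
    have hv0 : v ≠ 0 := by
      intro h0
      rw [hvsum] at h0
      have := Fintype.linearIndependent_iff.1 hli _ h0 j
      have hj : O ((j : ℕ) : ZMod n) := ⟨0, by simp⟩
      simp [hj] at this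
    have hPv : aeval T P v = 0 := by
      have hc : ∀ R : F[X], Commute (aeval T R) π := fun R => by
        induction R using Polynomial.induction_on' with
        | add f g hf hg => rw [map_add]; exact hf.add_left hg
        | monomial k c =>
          rw [aeval_monomial]
          exact Commute.mul_left (Algebra.commutes c π) (hcomm.pow_left k)
      have := congrArg (fun f : Module.End F L => f (∑ i ∈ Finset.range n, β ^ i)) (hc P).eq
      simp only [Module.End.mul_apply, hP, map_zero] at this
      exact this
    -- the additive order of `j` and the size of its orbit under multiplication by `q`
    set g := n.gcd j with hg
    have hg0 : 0 < g := Nat.gcd_pos_of_pos_left _ (Nat.pos_of_ne_zero hn0)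
    obtain ⟨e, j', hcop', hne, hje⟩ := Nat.exists_coprime n j
    rw [← hg] at hne hje
    have he0 : e ≠ 0 := by rintro rfl; simp at hne; exact hn0 hne
    have hen : e ∣ n := ⟨g, hne⟩
    obtain ⟨hs1, hs2⟩ := dvd_pow_div_gcd_sub_one hq he0
      (fun p hp hpe => hdvd p hp (hpe.trans hen)) (fun h => h2 (h.trans hen))
    set s := e / e.gcd (q - 1) with hs
    have hse : s ∣ e := Nat.div_dvd_of_dvd (Nat.gcd_dvd_left _ _)
    have hs0 : s ≠ 0 := fun h => he0 (Nat.eq_zero_of_zero_dvd (h ▸ hse))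
    obtain ⟨w, hw⟩ := hs1
    set κ := η ^ (j' * w) with hκ
    have hjs : (j : ℕ) * (q ^ s - 1) = n * (j' * w) := by rw [hw, hje, hne]; ring
    have hqs : 1 ≤ q ^ s := Nat.one_le_pow _ _ (by omega)
    have hκj : (β ^ (j : ℕ)) ^ q ^ s = κ • β ^ (j : ℕ) := by
      rw [Algebra.smul_def, hκ, map_pow, ← hβ, ← pow_mul, ← pow_mul, ← pow_add, ← hjs]
      congr 1
      conv_lhs => rw [← Nat.sub_add_cancel hqs]
      ring
    have hirrs : Irreducible (X ^ s - C κ) := by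
      refine X_pow_sub_C_irreducible_of_forall_prime hs0
        (fun p hp hps => hneg p hp (hps.trans (hse.trans hen))) fun p hp hps y hy => ?_
      have hc : Nat.Coprime (j' * w) p := by
        rw [Nat.coprime_comm, hp.coprime_iff_not_dvd, hp.dvd_mul]
        rintro (h | h)
        · exact hp.one_lt.ne' (Nat.dvd_one.1 (hcop' ▸ Nat.dvd_gcd (hps.trans hse) h))
        · exact hs2 p hp hps (by rw [hw, mul_comm]; exact mul_dvd_mul_left e h)
      obtain ⟨z, hz⟩ := (pow_mem_range_pow_of_coprime hc η).1 ⟨y, hy⟩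
      exact hpow p hp (hps.trans (hse.trans hen)) z hz
    have horb : ∀ a : ℕ, (β ^ (q ^ a * j)) ^ q ^ s = κ • β ^ (q ^ a * j) := by
      intro a
      induction a with
      | zero => simpa using hκj
      | succ a ih =>
        have h1 : β ^ (q ^ (a + 1) * j) = (β ^ (q ^ a * j)) ^ q := by rw [← pow_mul]; ring
        rw [h1, pow_right_comm, ih, _root_.smul_pow, FiniteField.pow_card]
    have hfix : ∀ i : Fin n, O ((i : ℕ) : ZMod n) → (β ^ (i : ℕ)) ^ q ^ s = κ • β ^ (i : ℕ) := by
      rintro i ⟨a, ha⟩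
      have hi : (i : ℕ) = (q ^ a * j) % n := by
        have : (((i : ℕ)) : ZMod n) = ((q ^ a * j : ℕ) : ZMod n) := by push_cast; exact ha
        have := (ZMod.natCast_eq_natCast_iff _ _ _).1 this
        rw [← this, Nat.mod_eq_of_lt i.2]
      have h1 := horb a
      rw [hred (q ^ a * j), ← hi, _root_.smul_pow, ← pow_mul η, mul_comm _ (q ^ s), pow_mul η,
        FiniteField.pow_card_pow, smul_comm] at h1
      exact smul_right_injective _ (pow_ne_zero _ hη) h1
    have hfv : aeval T (X ^ s - C κ) v = 0 := by
      rw [hvsum, map_sum]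
      refine Finset.sum_eq_zero fun i _ => ?_
      split_ifs with h
      · simp [hTpow, hfix i h, Algebra.smul_def]
      · simp
    have hdvdP : X ^ s - C κ ∣ P := by
      by_contra hnd
      obtain ⟨x, y, hxy⟩ := (hirrs.coprime_iff_not_dvd.2 hnd)
      have := congrArg (fun R => aeval T R v) hxy
      simp only [map_add, map_mul, LinearMap.add_apply, Module.End.mul_apply, hfv, hPv, map_zero,
        add_zero, map_one, Module.End.one_apply] at this
      exact hv0 this.symm
    obtain ⟨R, rfl⟩ := hdvdP
    rw [mul_comm, map_mul, Module.End.mul_apply]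
    have : aeval T (X ^ s - C κ) (β ^ (j : ℕ)) = 0 := by
      simp [hTpow, hκj, Algebra.smul_def]
    rw [this, map_zero]
  have hzero : aeval T P = 0 := B.ext fun i => by rw [hB, hann]; rfl
  have : Finite L := Module.finite_of_finite F
  have hd := minpoly.dvd F T hzero
  rw [hT, FiniteField.minpoly_frobeniusAlgHom] at hd
  by_contra hP0
  have h1 := degree_le_of_dvd hd hP0
  rw [← C_1, degree_X_pow_sub_C (Nat.pos_of_ne_zero hn0)] at h1
  exact absurd hdeg (not_lt.2 h1)

theorem mem_range_algebraMap_of_pow_card_eq {F L : Type*} [Field F] [Fintype F] [Field L]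
    [Algebra F L] [FiniteDimensional F L] {x : L} (hx : x ^ Fintype.card F = x) :
    x ∈ Set.range (algebraMap F L) := by
  have : Finite L := Module.finite_of_finite F
  rw [IsGalois.mem_range_algebraMap_iff_fixed]
  intro f
  obtain ⟨n, rfl⟩ := (FiniteField.bijective_frobeniusAlgEquivOfAlgebraic_pow F L).2 f
  simp only [AlgEquiv.coe_pow, FiniteField.coe_frobeniusAlgEquivOfAlgebraic]
  exact Function.iterate_fixed hx _

/-- If `η` is not a `p`-th power for any prime `p` dividing the degree, then the nonzero multiples
of `(1 - β)⁻¹`, where `β ^ n = η`, are completely normal. -/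
theorem completelyNormal_smul_one_sub_inv {K L : Type*} [Field K] [Fintype K] [Field L]
    [Algebra K L] [FiniteDimensional K L] {η u : K} {β : L}
    (hβ : β ^ finrank K L = algebraMap K L η) (hη : η ≠ 0) (hu : u ≠ 0)
    (hβ1 : β ≠ 1)
    (hdvd : ∀ p : ℕ, p.Prime → p ∣ finrank K L → p ∣ Fintype.card K - 1)
    (h2 : 2 ∣ finrank K L → Fintype.card K % 4 ≠ 3)
    (hpow : ∀ p : ℕ, p.Prime → p ∣ finrank K L → ∀ y : K, y ^ p ≠ η)
    {m : ℕ} (hm : m ∣ finrank K L) :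
    (∀ co : Fin (finrank K L / m) → L, (∀ i, co i ^ Fintype.card K ^ m = co i) →
      ∑ i, co i * (u • (1 - β)⁻¹) ^ Fintype.card K ^ (m * (i : ℕ)) = 0 → ∀ i, co i = 0) ∧
    (∀ x : L, ∃ co : Fin (finrank K L / m) → L, (∀ i, co i ^ Fintype.card K ^ m = co i) ∧
      x = ∑ i, co i * (u • (1 - β)⁻¹) ^ Fintype.card K ^ (m * (i : ℕ))) := by
  classical
  have hn0 : finrank K L ≠ 0 := finrank_pos.ne'
  obtain ⟨r, hr⟩ := hm
  have hm0 : m ≠ 0 := by rintro rfl; simp at hr; exact hn0 hr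
  have hr0 : r ≠ 0 := by rintro rfl; simp at hr; exact hn0 hr
  have hmn : m ∣ finrank K L := ⟨r, hr⟩
  have hrn : r ∣ finrank K L := ⟨m, by rw [hr, mul_comm]⟩
  have hneg := exists_pow_eq_neg_one K h2
  have hβm : (β ^ r) ^ m = algebraMap K L η := by rw [← pow_mul, mul_comm, ← hr, hβ]
  have hirrm : Irreducible (X ^ m - C η) :=
    X_pow_sub_C_irreducible_of_forall_prime hm0 (fun p hp h => hneg p hp (h.trans hmn))
      (fun p hp h => hpow p hp (h.trans hmn))
  have hminm : minpoly K (β ^ r) = X ^ m - C η :=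
    (minpoly.eq_of_irreducible_of_monic hirrm (by simp [hβm]) (monic_X_pow_sub_C _ hm0)).symm
  have hint : IsIntegral K (β ^ r) := Algebra.IsIntegral.isIntegral _
  let F := IntermediateField.adjoin K {β ^ r}
  have hFm : finrank K F = m := by
    rw [IntermediateField.adjoin.finrank hint, hminm, natDegree_X_pow_sub_C]
  have : Finite F := Module.finite_of_finite K
  let _ : Fintype F := Fintype.ofFinite F
  have hcard : Fintype.card F = Fintype.card K ^ m := by
    rw [Module.card_eq_pow_finrank (K := K) (V := F), hFm]
  have hFr : finrank F L = r := by
    have h := finrank_mul_finrank K F L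
    rw [hFm, hr] at h
    exact Nat.eq_of_mul_eq_mul_left (Nat.pos_of_ne_zero hm0) h
  let ηF : F := IntermediateField.AdjoinSimple.gen K (β ^ r)
  have hηF : algebraMap F L ηF = β ^ r := IntermediateField.AdjoinSimple.algebraMap_gen K _
  have hηFm : ηF ^ m = algebraMap K F η := by
    apply (algebraMap F L).injective
    rw [map_pow, hηF, hβm, ← IsScalarTower.algebraMap_apply]
  have hηF0 : ηF ≠ 0 := by
    intro h
    rw [h, zero_pow hm0, eq_comm, map_eq_zero] at hηFm
    exact hη hηFm
  have hpowF : ∀ p : ℕ, p.Prime → p ∣ finrank F L → ∀ y : F, y ^ p ≠ ηF := by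
    intro p hp hpr
    rw [hFr] at hpr
    obtain ⟨ε, hε⟩ := hneg p hp (hpr.trans hrn)
    exact pow_ne_adjoinSimple_gen hm0 hminm hε (hpow p hp (hpr.trans hrn))
  have hq1 : Fintype.card K - 1 ∣ Fintype.card F - 1 := by
    rw [hcard]; simpa using Nat.sub_dvd_pow_sub_pow (Fintype.card K) 1 m
  have h4 : 2 ∣ finrank F L → Fintype.card F % 4 ≠ 3 := by
    intro h
    rw [hFr] at h
    have h3 := h2 (h.trans hrn)
    have h5 := hdvd 2 Nat.prime_two (h.trans hrn)
    have h6 : Fintype.card K % 4 = 1 := by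
      have := Fintype.one_lt_card (α := K); omega
    rw [hcard, Nat.pow_mod, h6]; simp
  have h1β : 1 - β ≠ 0 := sub_ne_zero.2 hβ1.symm
  set α := u • (1 - β)⁻¹ with hα
  have hα0 : α ≠ 0 := smul_ne_zero hu (inv_ne_zero h1β)
  obtain ⟨w, hw⟩ : ∃ w : F, ∑ i ∈ Finset.range r, β ^ i = algebraMap F L w * α := by
    refine ⟨algebraMap K F u⁻¹ * (1 - ηF), ?_⟩
    rw [map_mul, map_sub, hηF, map_one, ← IsScalarTower.algebraMap_apply, hα, Algebra.smul_def,
      ← mul_neg_geom_sum, map_inv₀]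
    have : algebraMap K L u ≠ 0 := by simpa
    field_simp
  have hpm : ∀ (x : L) (i : ℕ), x ^ Fintype.card K ^ (m * i) = x ^ Fintype.card F ^ i := by
    intro x i; rw [hcard, pow_mul]
  have hr' : finrank K L / m = r := by
    rw [hr, Nat.mul_div_cancel_left _ (Nat.pos_of_ne_zero hm0)]
  have hli : LinearIndependent F fun i : Fin r => α ^ Fintype.card F ^ (i : ℕ) := by
    rw [Fintype.linearIndependent_iff]
    intro c hc
    have key := eq_zero_of_aeval_frobenius_geom_sum (F := F) (L := L) (η := ηF) (β := β)
      (by rw [hFr, hηF]) hηF0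
      (fun p hp h => (hdvd p hp (h.trans (hFr ▸ hrn))).trans hq1) h4 hpowF
      (P := ∑ i : Fin r, C (c i) * X ^ (i : ℕ))
      (by rw [hFr]; exact degree_sum_fin_lt c) (by
        rw [hFr, hw]
        rw [← Algebra.smul_def, map_smul, map_sum, LinearMap.sum_apply]
        have : ∀ (i : ℕ) (x : L), ((FiniteField.frobeniusAlgHom F L).toLinearMap ^ i) x =
            x ^ Fintype.card F ^ i := by
          intro s
          induction s with
          | zero => simp
          | succ s ih =>
            intro x
            rw [pow_succ', Module.End.mul_apply, ih, pow_succ, pow_mul]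
            rfl
        have h0 : ∑ i : Fin r, (aeval (FiniteField.frobeniusAlgHom F L).toLinearMap
            (C (c i) * X ^ (i : ℕ))) α = 0 := by
          rw [← hc]
          refine Finset.sum_congr rfl fun i _ => ?_
          simp [this, Algebra.smul_def]
        rw [h0, smul_zero])
    intro i
    have := congrArg (fun P => coeff P (i : ℕ)) key
    simpa [finsetSum_coeff, coeff_C_mul, coeff_X_pow, Fin.val_inj, eq_comm] using this
  have hfixed : ∀ x : L, x ^ Fintype.card K ^ m = x → ∃ y : F, algebraMap F L y = x := by
    intro x hx
    exact mem_range_algebraMap_of_pow_card_eq (by rw [hcard, hx])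
  rw [hr']
  constructor
  · intro co hco hsum i
    choose c hc using fun i => hfixed _ (hco i)
    have := Fintype.linearIndependent_iff.1 hli c (by
      rw [← hsum]
      refine Finset.sum_congr rfl fun i _ => ?_
      rw [Algebra.smul_def, hc, hpm]) i
    rw [← hc, this, map_zero]
  · intro x
    have : Nonempty (Fin r) := ⟨⟨0, Nat.pos_of_ne_zero hr0⟩⟩
    let B := basisOfLinearIndependentOfCardEqFinrank hli (by simp [hFr])
    refine ⟨fun i => algebraMap F L (B.repr x i), fun i => ?_, ?_⟩
    · rw [← map_pow, ← hcard, FiniteField.pow_card]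
    · conv_lhs => rw [← B.sum_repr x]
      refine Finset.sum_congr rfl fun i _ => ?_
      rw [Algebra.smul_def, hpm]
      simp [B]

theorem aeval_Pmat {K : Type} [Field K] {E : Type*} [Field E] [Algebra K E] (a b c d : K)
    (f : K[X]) {x : E} (hx : c • x + algebraMap K E d ≠ 0) :
    aeval x (Pmat a b c d f) = (c • x + algebraMap K E d) ^ f.natDegree *
      aeval ((a • x + algebraMap K E b) / (c • x + algebraMap K E d)) f := by
  rw [aeval_eq_sum_range (p := f), Finset.mul_sum, Pmat, map_sum]
  refine Finset.sum_congr rfl fun i hi => ?_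
  rw [Finset.mem_range] at hi
  obtain ⟨j, hj⟩ := Nat.exists_eq_add_of_le (Nat.lt_succ_iff.1 hi)
  simp only [map_mul, map_pow, map_add, aeval_C, aeval_X, ← Algebra.smul_def, smul_mul_assoc,
    mul_smul_comm]
  rw [hj, Nat.add_sub_cancel_left, pow_add, div_pow]
  congr 1
  field_simp

/-- Up to a scalar, the iterated transforms of `X - A` have this shape. -/
noncomputable def powForm {K : Type} [Field K] (a b c d η : K) (n : ℕ) : K[X] :=
  (C d * X - C b) ^ n - C η * (C a - C c * X) ^ n

theorem natDegree_powForm {K : Type} [Field K] {a b c d η : K} {n : ℕ}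
    (h : d ^ n ≠ η * (-c) ^ n) : (powForm a b c d η n).natDegree = n := by
  have h1 : (C d * X - C b).natDegree ≤ 1 := by compute_degree
  have h2 : (C a - C c * X).natDegree ≤ 1 := by compute_degree
  have hle : (powForm a b c d η n).natDegree ≤ n := by
    refine (natDegree_sub_le_of_le (natDegree_pow_le_of_le n h1)
      ((natDegree_C_mul_le _ _).trans (natDegree_pow_le_of_le n h2))).trans ?_
    simp
  refine natDegree_eq_of_le_of_coeff_ne_zero hle ?_
  have e1 := coeff_pow_of_natDegree_le (m := n) h1
  have e2 := coeff_pow_of_natDegree_le (m := n) h2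
  rw [mul_one] at e1 e2
  rw [powForm, coeff_sub, coeff_C_mul, e1, e2]
  simpa [sub_eq_zero] using h

theorem Rsigma_powForm {K : Type} [Field K] {a b c d η u : K} {n t : ℕ}
    (hdet : a * d - b * c ≠ 0) (hc : c ≠ 0) (hu : u ≠ 0) (h : d ^ n ≠ η * (-c) ^ n) :
    ∃ v : K, v ≠ 0 ∧ Rsigma a b c d t (C u * powForm a b c d η n) =
      C v * powForm a b c d η (n * t) := by
  set Δ := a * d - b * c with hΔ
  let x : RatFunc K := algebraMap K[X] (RatFunc K) X
  have hlin : ∀ c d : K, c ≠ 0 → c • x + algebraMap K (RatFunc K) d ≠ 0 := by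
    intro c d hc h0
    have h1 : algebraMap K[X] (RatFunc K) (C c * X + C d) = 0 := by
      rw [← h0, map_add, map_mul, Algebra.smul_def]
      rfl
    rw [FaithfulSMul.algebraMap_eq_zero_iff] at h1
    have := congrArg (fun f => coeff f 1) h1
    simp [coeff_C] at this
    exact hc this
  have hx : ∀ f : K[X], aeval x f = algebraMap K[X] (RatFunc K) f := by
    intro f
    rw [aeval_algebraMap_apply, aeval_X_left_apply]
  have hinj : Function.Injective (algebraMap K[X] (RatFunc K)) :=
    FaithfulSMul.algebraMap_injective _ _
  have hdet' : algebraMap K (RatFunc K) Δ ≠ 0 := by simpa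
  have hmapdet : algebraMap K (RatFunc K) Δ = algebraMap K _ a * algebraMap K _ d -
      algebraMap K _ b * algebraMap K _ c := by simp [hΔ]
  have h1 : Pmat a b c d (C u * powForm a b c d η n) = C (u * Δ ^ n) * (X ^ n - C η) := by
    apply hinj
    rw [← hx, ← hx, aeval_Pmat _ _ _ _ _ (hlin c d hc), natDegree_C_mul hu, natDegree_powForm h]
    have hcd := hlin c d hc
    simp only [powForm, map_mul, map_sub, map_pow, aeval_C, aeval_X, hmapdet, Algebra.smul_def]
      at hcd ⊢
    have e1 : ∀ z a b c d : RatFunc K, c * z + d ≠ 0 →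
        d * ((a * z + b) / (c * z + d)) - b = (a * d - b * c) * z / (c * z + d) := by
      intro z a b c d h
      rw [eq_div_iff h, sub_mul, mul_assoc, div_mul_cancel₀ _ h]; ring
    have e2 : ∀ z a b c d : RatFunc K, c * z + d ≠ 0 →
        a - c * ((a * z + b) / (c * z + d)) = (a * d - b * c) / (c * z + d) := by
      intro z a b c d h
      rw [eq_div_iff h, sub_mul, mul_assoc, div_mul_cancel₀ _ h]; ring
    rw [e1 _ _ _ _ _ hcd, e2 _ _ _ _ _ hcd, div_pow, div_pow, mul_pow]
    field_simp
  have hΔn : u * Δ ^ n ≠ 0 := mul_ne_zero hu (pow_ne_zero _ hdet)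
  have h2 : St t (Pmat a b c d (C u * powForm a b c d η n)) =
      C (u * Δ ^ n) * (X ^ (n * t) - C η) := by
    rw [h1, St]; simp [← pow_mul, mul_comm]
  have hdeg : (C (u * Δ ^ n) * (X ^ (n * t) - C η)).natDegree = n * t := by
    rw [natDegree_C_mul hΔn, natDegree_X_pow_sub_C]
  refine ⟨u * Δ ^ n / Δ ^ (n * t), div_ne_zero hΔn (pow_ne_zero _ hdet), ?_⟩
  rw [Rsigma, h2, ← hΔ]
  apply hinj
  have hcd := hlin (-c / Δ) (a / Δ) (div_ne_zero (neg_ne_zero.2 hc) hdet)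
  rw [← hx, ← hx, aeval_Pmat _ _ _ _ _ hcd, hdeg]
  have hac : algebraMap K (RatFunc K) a - algebraMap K (RatFunc K) c * x ≠ 0 := by
    have := hlin (-c) a (neg_ne_zero.2 hc)
    rw [Algebra.smul_def, map_neg] at this
    intro h; apply this; linear_combination h
  simp only [powForm, map_mul, map_sub, map_pow, aeval_C, aeval_X, Algebra.smul_def, map_div₀,
    map_neg]
  have e1 : ∀ z a b c d D : RatFunc K, D ≠ 0 → -c / D * z + a / D = (a - c * z) / D := by
    intro z a b c d D h; field_simp; ring
  have e2 : ∀ z a b c d D : RatFunc K, D ≠ 0 → a - c * z ≠ 0 →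
      (d / D * z + -b / D) / ((a - c * z) / D) = (d * z - b) / (a - c * z) := by
    intro z a b c d D h h'; field_simp; ring
  rw [e1 _ _ (algebraMap K _ b) _ (algebraMap K _ d) _ hdet', e2 _ _ _ _ _ _ hdet' hac, div_pow,
    div_pow]
  field_simp

theorem pow_eq_of_aeval_powForm_eq_zero {K : Type} [Field K] {E : Type*} [Field E] [Algebra K E]
    {a b c d η : K} {n : ℕ} (hdet : a * d - b * c ≠ 0) (hn : n ≠ 0) {α : E}
    (hα : aeval α (powForm a b c d η n) = 0) :
    algebraMap K E a - algebraMap K E c * α ≠ 0 ∧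
      ((algebraMap K E d * α - algebraMap K E b) / (algebraMap K E a - algebraMap K E c * α)) ^ n =
        algebraMap K E η := by
  have hdet' : algebraMap K E a * algebraMap K E d - algebraMap K E b * algebraMap K E c ≠ 0 := by
    simpa only [← map_mul, ← map_sub, ne_eq, map_eq_zero]
  simp only [powForm, map_sub, map_mul, map_pow, aeval_C, aeval_X] at hα
  have hac : algebraMap K E a - algebraMap K E c * α ≠ 0 := by
    intro h0
    rw [h0, zero_pow hn, mul_zero, sub_zero] at hα
    have h1 := pow_eq_zero_iff hn |>.1 hα
    exact hdet' (by linear_combination algebraMap K E d * h0 + algebraMap K E c * h1)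
  refine ⟨hac, ?_⟩
  rw [div_pow, div_eq_iff (pow_ne_zero _ hac)]
  linear_combination hα

theorem irreducible_powForm {K : Type} [Field K] {a b c d η : K} {n : ℕ}
    (hdet : a * d - b * c ≠ 0) (hn : n ≠ 0) (h : d ^ n ≠ η * (-c) ^ n)
    (hirr : Irreducible (X ^ n - C η)) : Irreducible (powForm a b c d η n) := by
  have hdeg := natDegree_powForm (a := a) (b := b) h
  have h0 : powForm a b c d η n ≠ 0 := by
    intro h0
    rw [h0, natDegree_zero] at hdeg
    exact hn hdeg.symm
  obtain ⟨α, hα⟩ := IsAlgClosed.exists_aeval_eq_zero (AlgebraicClosure K)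
    (powForm a b c d η n) (by rw [degree_eq_natDegree h0, hdeg]; exact_mod_cast hn)
  obtain ⟨-, hβ⟩ := pow_eq_of_aeval_powForm_eq_zero hdet hn hα
  set β := (algebraMap K (AlgebraicClosure K) d * α - algebraMap K _ b) /
    (algebraMap K _ a - algebraMap K _ c * α) with hβdef
  have hminβ : minpoly K β = X ^ n - C η :=
    (minpoly.eq_of_irreducible_of_monic hirr (by simp [hβ]) (monic_X_pow_sub_C _ hn)).symm
  have hαint : IsIntegral K α := Algebra.IsIntegral.isIntegral _
  have hβint : IsIntegral K β := Algebra.IsIntegral.isIntegral _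
  have hmem : β ∈ IntermediateField.adjoin K {α} := by
    have hα' := IntermediateField.mem_adjoin_simple_self K α
    have hk : ∀ k : K, algebraMap K (AlgebraicClosure K) k ∈ IntermediateField.adjoin K {α} :=
      fun k => IntermediateField.algebraMap_mem _ k
    exact div_mem (sub_mem (mul_mem (hk d) hα') (hk b)) (sub_mem (hk a) (mul_mem (hk c) hα'))
  have hle : IntermediateField.adjoin K {β} ≤ IntermediateField.adjoin K {α} :=
    IntermediateField.adjoin_simple_le_iff.2 hmem
  have hfin : FiniteDimensional K (IntermediateField.adjoin K {α}) :=
    IntermediateField.adjoin.finiteDimensional hαint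
  have hn' : n ≤ (minpoly K α).natDegree := by
    rw [← IntermediateField.adjoin.finrank hαint]
    have := IntermediateField.finrank_le_of_le_right hle
    rwa [IntermediateField.adjoin.finrank hβint, hminβ, natDegree_X_pow_sub_C] at this
  exact (associated_of_dvd_of_natDegree_le (minpoly.dvd K α hα) h0
    (hdeg.le.trans hn')).irreducible (minpoly.irreducible hαint)

/-- The root `(aβ + b) / (cβ + d)` with `ab = 0`, written as a multiple of `(1 - γ)⁻¹` where
`γ ^ n` again is not a `p`-th power. -/
theorem exists_eq_smul_one_sub_inv {K L : Type*} [Field K] [Field L] [Algebra K L]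
    {a b c d η : K} {n : ℕ} (hdet : a * d - b * c ≠ 0) (hc : c ≠ 0) (hd : d ≠ 0)
    (hab : a * b = 0) (hη : η ≠ 0)
    (hpow : ∀ p : ℕ, p.Prime → p ∣ n → ∀ y : K, y ^ p ≠ η) {α β : L}
    (hac : algebraMap K L a - algebraMap K L c * α ≠ 0)
    (hβ : β = (algebraMap K L d * α - algebraMap K L b) / (algebraMap K L a - algebraMap K L c * α))
    (hβn : β ^ n = algebraMap K L η) (hn : n ≠ 0) :
    ∃ (u θ : K) (γ : L), u ≠ 0 ∧ θ ≠ 0 ∧ γ ≠ 1 ∧ γ ^ n = algebraMap K L θ ∧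
      α = u • (1 - γ)⁻¹ ∧ ∀ p : ℕ, p.Prime → p ∣ n → ∀ y : K, y ^ p ≠ θ := by
  have hc' : algebraMap K L c ≠ 0 := by simpa
  have hd' : algebraMap K L d ≠ 0 := by simpa
  have hdet' : algebraMap K L a * algebraMap K L d - algebraMap K L b * algebraMap K L c ≠ 0 := by
    simpa only [← map_mul, ← map_sub, ne_eq, map_eq_zero]
  rcases mul_eq_zero.1 hab with rfl | rfl
  · have hb : b ≠ 0 := by rintro rfl; simp at hdet
    have hcd : -c / d ≠ 0 := div_ne_zero (neg_ne_zero.2 hc) hd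
    have hb' : algebraMap K L b ≠ 0 := by simpa
    rw [map_zero, zero_sub] at hac hβ
    have hα : α ≠ 0 := by rintro rfl; simp at hac
    have hγ : 1 - algebraMap K L (-c / d) * β = algebraMap K L (b / d) * α⁻¹ := by
      rw [hβ, map_div₀, map_div₀, map_neg]
      field_simp
      ring
    refine ⟨b / d, (-c / d) ^ n * η, algebraMap K L (-c / d) * β, div_ne_zero hb hd,
      mul_ne_zero (pow_ne_zero _ hcd) hη, fun h => ?_, ?_, ?_, ?_⟩
    · rw [h, sub_self, map_div₀] at hγ
      exact mul_ne_zero (div_ne_zero hb' hd') (inv_ne_zero hα) hγ.symm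
    · rw [mul_pow, hβn, map_mul, map_pow]
    · rw [hγ, Algebra.smul_def, map_div₀]
      field_simp
    · rintro p hp ⟨r, hr⟩ y hy
      refine hpow p hp ⟨r, hr⟩ (y / (-c / d) ^ r) ?_
      rw [div_pow, hy, ← pow_mul, mul_comm r, ← hr, mul_div_cancel_left₀ _ (pow_ne_zero _ hcd)]
  · have ha : a ≠ 0 := by rintro rfl; simp at hdet
    have hcd : -d / c ≠ 0 := div_ne_zero (neg_ne_zero.2 hd) hc
    have ha' : algebraMap K L a ≠ 0 := by simpa
    rw [map_zero, sub_zero] at hβ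
    have hβ0 : β ≠ 0 := by
      rintro rfl
      rw [zero_pow hn, eq_comm, map_eq_zero] at hβn
      exact hη hβn
    have hα : α ≠ 0 := by rintro rfl; simp at hβ; exact hβ0 hβ
    have hγ : 1 - algebraMap K L (-d / c) * β⁻¹ = algebraMap K L (a / c) * α⁻¹ := by
      rw [hβ, map_div₀, map_div₀, map_neg]
      field_simp
      ring
    refine ⟨a / c, (-d / c) ^ n * η⁻¹, algebraMap K L (-d / c) * β⁻¹, div_ne_zero ha hc,
      mul_ne_zero (pow_ne_zero _ hcd) (inv_ne_zero hη), fun h => ?_, ?_, ?_, ?_⟩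
    · rw [h, sub_self, map_div₀] at hγ
      exact mul_ne_zero (div_ne_zero ha' hc') (inv_ne_zero hα) hγ.symm
    · rw [mul_pow, inv_pow, hβn, map_mul, map_pow, map_inv₀]
    · rw [hγ, Algebra.smul_def, map_div₀]
      field_simp
    · rintro p hp ⟨r, hr⟩ y hy
      refine hpow p hp ⟨r, hr⟩ ((-d / c) ^ r / y) ?_
      rw [div_pow, hy, ← pow_mul, mul_comm r, ← hr, div_mul_cancel_left₀ (pow_ne_zero _ hcd),
        inv_inv]

/-- Theorem (main theorem, case i)): with `g₀ = x - A`, `A ≠ a/c`, `t ≥ 2` all of whose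
prime factors divide `q - 1`, `σ = [[a,b],[c,d]] ∈ GL₂(F_q)` with `cd ≠ 0`, `ab = 0`,
`η(g₀;σ) = (-d/c)·g₀(b/d)·g₀(a/c)⁻¹` not an `ℓ`-th power for any prime `ℓ ∣ t`, and `t`
odd when `q ≡ 3 (mod 4)`: every iterate `g_k = g_{k-1}^{R_{σ,t}}` is irreducible of degree
`t^k` and all its roots are completely normal over `F_q` (for each divisor `m` of `t^k`,
the conjugates `α^{q^{m i}}` form a basis over the fixed field of `x ↦ x^{q^m}`). -/
theorem stmt_19 (K : Type) [Field K] [Fintype K] (q : ℕ) (hq : Fintype.card K = q)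
    (a b c d A : K) (hdet : a * d - b * c ≠ 0) (hcd : c * d ≠ 0) (hab : a * b = 0)
    (hA : A ≠ a / c)
    (t : ℕ) (ht : 2 ≤ t) (htq : ∀ ℓ : ℕ, ℓ.Prime → ℓ ∣ t → ℓ ∣ q - 1)
    (hq3 : q % 4 = 3 → Odd t)
    (heta : ∀ ℓ : ℕ, ℓ.Prime → ℓ ∣ t →
      ¬ ∃ y : K, y ^ ℓ = (-d / c) * ((b / d - A) * (a / c - A)⁻¹))
    (G : ℕ → Polynomial K) (hG0 : G 0 = (X : Polynomial K) - C A)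
    (hGrec : ∀ k, G (k + 1) = Rsigma a b c d t (G k)) :
    ∀ k, Irreducible (G k) ∧ (G k).natDegree = t ^ k ∧
      ∀ (L : Type) [Field L] [Algebra K L], Module.finrank K L = t ^ k →
        ∀ α : L, aeval α (G k) = 0 →
          ∀ m : ℕ, m ∣ t ^ k →
            (∀ co : Fin (t ^ k / m) → L, (∀ i, co i ^ q ^ m = co i) →
              ∑ i, co i * α ^ q ^ (m * (i : ℕ)) = 0 → ∀ i, co i = 0) ∧
            (∀ x : L, ∃ co : Fin (t ^ k / m) → L, (∀ i, co i ^ q ^ m = co i) ∧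
              x = ∑ i, co i * α ^ q ^ (m * (i : ℕ))) := by
  subst hq
  have hc : c ≠ 0 := left_ne_zero_of_mul hcd
  have hd : d ≠ 0 := right_ne_zero_of_mul hcd
  have hu0 : a - A * c ≠ 0 := fun h => hA (by rw [eq_div_iff hc]; linear_combination -h)
  have hac : a / c - A ≠ 0 := sub_ne_zero.2 hA.symm
  obtain ⟨η, hηdef⟩ : ∃ η, η = (-d / c) * ((b / d - A) * (a / c - A)⁻¹) := ⟨_, rfl⟩
  have hηeq : η * (a - A * c) = -(b - A * d) := by
    have h1 : a - A * c = c * (a / c - A) := by field_simp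
    have h2 : a - c * A ≠ 0 := by
      rw [mul_comm c A, h1]
      exact mul_ne_zero hc hac
    rw [hηdef, h1]
    field_simp
  have hpow : ∀ p : ℕ, p.Prime → p ∣ t → ∀ y : K, y ^ p ≠ η :=
    fun p hp hpt y hy => heta p hp hpt ⟨y, hy.trans hηdef⟩
  obtain ⟨p₀, hp₀, hp₀t⟩ := Nat.exists_prime_and_dvd (n := t) (by omega)
  have hη : η ≠ 0 := fun h => hpow p₀ hp₀ hp₀t 0 (by rw [h, zero_pow hp₀.ne_zero])
  have hpowk : ∀ k p : ℕ, p.Prime → p ∣ t ^ k → ∀ y : K, y ^ p ≠ η :=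
    fun k p hp h => hpow p hp (hp.dvd_of_dvd_pow h)
  have h2k : ∀ k : ℕ, 2 ∣ t ^ k → Fintype.card K % 4 ≠ 3 := fun k h h3 =>
    Nat.not_even_iff_odd.2 (hq3 h3) (even_iff_two_dvd.2 (Nat.prime_two.dvd_of_dvd_pow h))
  have hlead : ∀ k : ℕ, d ^ t ^ k ≠ η * (-c) ^ t ^ k := by
    rintro (_ | k) h
    · rw [pow_zero, pow_one, pow_one] at h
      apply hdet
      linear_combination (a - A * c) * h - c * hηeq
    · obtain ⟨r, hr⟩ : p₀ ∣ t ^ (k + 1) := dvd_pow hp₀t (Nat.succ_ne_zero k)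
      refine hpow p₀ hp₀ hp₀t (d ^ r / (-c) ^ r) ?_
      rw [div_pow, ← pow_mul, ← pow_mul, mul_comm r, ← hr, h,
        mul_div_cancel_right₀ _ (pow_ne_zero _ (neg_ne_zero.2 hc))]
  have hG : ∀ k, ∃ u : K, u ≠ 0 ∧ G k = C u * powForm a b c d η (t ^ k) := by
    intro k
    induction k with
    | zero =>
      refine ⟨(a - A * c) / (a * d - b * c), div_ne_zero hu0 hdet, ?_⟩
      have e1 : (a - A * c) / (a * d - b * c) * (d + η * c) = 1 := by
        rw [div_mul_eq_mul_div, div_eq_one_iff_eq hdet]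
        linear_combination c * hηeq
      have e2 : (a - A * c) / (a * d - b * c) * (b + η * a) = A := by
        rw [div_mul_eq_mul_div, div_eq_iff hdet]
        linear_combination a * hηeq
      rw [hG0, powForm, pow_zero, pow_one, pow_one]
      have e1' := congrArg (C : K → K[X]) e1
      have e2' := congrArg (C : K → K[X]) e2
      rw [C_mul, C_add, C_mul] at e1' e2'
      rw [C_1] at e1'
      linear_combination -X * e1' + e2'
    | succ k ih =>
      obtain ⟨u, hu, hGk⟩ := ih
      obtain ⟨v, hv, h⟩ := Rsigma_powForm (t := t) hdet hc hu (hlead k)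
      exact ⟨v, hv, by rw [hGrec, hGk, h, pow_succ]⟩
  intro k
  have hn : t ^ k ≠ 0 := pow_ne_zero _ (by omega)
  obtain ⟨u, hu, hGk⟩ := hG k
  have hirr : Irreducible (X ^ t ^ k - C η) := X_pow_sub_C_irreducible_of_forall_prime hn
    (exists_pow_eq_neg_one K (h2k k)) (hpowk k)
  refine ⟨?_, ?_, ?_⟩
  · rw [hGk, irreducible_isUnit_mul (isUnit_C.2 hu.isUnit)]
    exact irreducible_powForm hdet hn (hlead k) hirr
  · rw [hGk, natDegree_C_mul hu, natDegree_powForm (hlead k)]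
  · intro L _ _ hL α hα m hm
    have : FiniteDimensional K L := Module.finite_of_finrank_pos (by omega)
    rw [hGk, map_mul, aeval_C, mul_eq_zero, map_eq_zero, or_iff_right hu] at hα
    obtain ⟨h0, hβ⟩ := pow_eq_of_aeval_powForm_eq_zero hdet hn hα
    obtain ⟨w, θ, γ, hw, hθ, hγ1, hγ, rfl, hpowθ⟩ :=
      exists_eq_smul_one_sub_inv hdet hc hd hab hη (hpowk k) h0 rfl hβ hn
    rw [← hL] at hm hγ hpowθ ⊢
    exact completelyNormal_smul_one_sub_inv hγ hθ hw hγ1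
      (fun p hp h => htq p hp (hp.dvd_of_dvd_pow (hL ▸ h))) (fun h => h2k k (hL ▸ h)) hpowθ hm
end
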